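/- arXiv:2404.04599 — 2 statements merged into one kernel-verified Lean document; each statement's English description precedes it below -/
import Mathlib

section
/- Optimal one-way LOCC tester for mixed input (Theorem thm:ext / lemma-3311612): Let P = (Pyes, Pno) be a property of bipartite mixed states on Fin d × Fin d that is unitarily invariant on H_B and such that every element of Pyes is pure, i.e., equals ψψ† for some unit vector ψ : (Fin d × Fin d) → ℂ. Let 0 < s < c ≤ 1 and suppose there exists a (c,s)-tester for P with sample complexity N ≥ 1. Then there exists a one-way LOCC tester from Bob to Alice that is a (c,s)-tester for P with sample complexity at most ⌈100 * Real.log (1/s + 10) * (c − s)⁻³⌉ * max N ⌈2 * (c − s)⁻¹⌉ (in particular at most 200 * Real.log(1/s + 10) * (c − s)⁻⁴ * N). -/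
open scoped ComplexConjugate ComplexOrder Kronecker Matrix
open MeasureTheory

namespace PaperStmt

/-- The rank-one matrix `ψψ†` associated with a vector `ψ`. -/
noncomputable def outer {ι : Type*} (ψ : ι → ℂ) : Matrix ι ι ℂ :=
  Matrix.of fun x y => ψ x * conj (ψ y)

/-- The `N`-fold tensor power of a square matrix `ρ`. -/
noncomputable def tpow {ι : Type*} (ρ : Matrix ι ι ℂ) (N : ℕ) : Matrix (Fin N → ι) (Fin N → ι) ℂ :=
  Matrix.of fun x y => ∏ i, ρ (x i) (y i)

/-- `ψ` is a unit vector (for the ℓ² norm). -/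
def IsUnitVec {ι : Type*} [Fintype ι] (ψ : ι → ℂ) : Prop :=
  ∑ x, Complex.normSq (ψ x) = 1

/-- `0 ⊑ T ⊑ 1` in the Loewner order. -/
def IsTester {κ : Type*} [Fintype κ] [DecidableEq κ] (T : Matrix κ κ ℂ) : Prop :=
  T.PosSemidef ∧ ((1 : Matrix κ κ ℂ) - T).PosSemidef

/-- `ρ` is a density matrix: positive semidefinite with unit trace. -/
def IsDensity {ι : Type*} [Fintype ι] (ρ : Matrix ι ι ℂ) : Prop :=
  ρ.PosSemidef ∧ ρ.trace = 1

/-- The acceptance probability `tr (T · ρ^{⊗N})` of a tester `T` on `N` samples of `ρ`. -/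
noncomputable def acc {ι : Type*} [Fintype ι] {N : ℕ}
    (T : Matrix (Fin N → ι) (Fin N → ι) ℂ) (ρ : Matrix ι ι ℂ) : ℝ :=
  ((T * tpow ρ N).trace).re

/-- The trace distance `½ ∑ᵢ |λᵢ(ρ - σ)|` between (Hermitian) matrices. -/
noncomputable def traceDist {κ : Type*} [Fintype κ] [DecidableEq κ]
    (ρ σ : Matrix κ κ ℂ) : ℝ :=
  if h : (ρ - σ).IsHermitian then (1 / 2) * ∑ i, |h.eigenvalues i| else 0

/-- The local tester on `H_A` determined by a matrix `M` acting on Alice's registers. -/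
noncomputable def localA {d N : ℕ} (M : Matrix (Fin N → Fin d) (Fin N → Fin d) ℂ) :
    Matrix (Fin N → Fin d × Fin d) (Fin N → Fin d × Fin d) ℂ :=
  Matrix.of fun x y =>
    M (fun i => (x i).1) (fun i => (y i).1) *
      (if (fun i => (x i).2) = (fun i => (y i).2) then 1 else 0)

/-- The vector `(I ⊗ U) ψ` : the unitary `U` applied to the `B` part of `ψ`. -/
noncomputable def applyB {d : ℕ} (U : Matrix (Fin d) (Fin d) ℂ) (ψ : Fin d × Fin d → ℂ) :
    Fin d × Fin d → ℂ :=
  fun p => ∑ k, U p.2 k * ψ (p.1, k)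

/-- The partial trace over the second (`B`) tensor factor. -/
noncomputable def ptraceB {d : ℕ} (M : Matrix (Fin d × Fin d) (Fin d × Fin d) ℂ) :
    Matrix (Fin d) (Fin d) ℂ :=
  Matrix.of fun a b => ∑ j, M (a, j) (b, j)


/-- A one-way LOCC tester from Bob to Alice: Bob measures a POVM `E` on his registers,
sends the classical outcome `k`, and Alice applies the two-outcome measurement `F k`. -/
def IsOneWayLOCC {d N : ℕ}
    (T : Matrix (Fin N → Fin d × Fin d) (Fin N → Fin d × Fin d) ℂ) : Prop :=
  ∃ (m : ℕ) (E F : Fin m → Matrix (Fin N → Fin d) (Fin N → Fin d) ℂ),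
    (∀ k, (E k).PosSemidef) ∧ (∑ k, E k = 1) ∧ (∀ k, IsTester (F k)) ∧
    ∀ x y, T x y =
      ∑ k, F k (fun i => (x i).1) (fun i => (y i).1) *
        E k (fun i => (x i).2) (fun i => (y i).2)


set_option linter.unusedSectionVars false

section Tensor

variable {ι : Type*}

/-- The tensor product of operators on two groups of samples. -/
noncomputable def ten {a b : ℕ} (A : Matrix (Fin a → ι) (Fin a → ι) ℂ)
    (B : Matrix (Fin b → ι) (Fin b → ι) ℂ) : Matrix (Fin (a + b) → ι) (Fin (a + b) → ι) ℂ :=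
  Matrix.of fun x y =>
    A (fun i => x (Fin.castAdd b i)) (fun i => y (Fin.castAdd b i)) *
      B (fun i => x (Fin.natAdd a i)) (fun i => y (Fin.natAdd a i))

theorem ten_eq {a b : ℕ} (A : Matrix (Fin a → ι) (Fin a → ι) ℂ)
    (B : Matrix (Fin b → ι) (Fin b → ι) ℂ) :
    ten A B = (A ⊗ₖ B).submatrix (Fin.appendEquiv (α := ι) a b).symm
      (Fin.appendEquiv (α := ι) a b).symm := by
  ext x y
  rfl

theorem tpow_add (ρ : Matrix ι ι ℂ) (a b : ℕ) :
    tpow ρ (a + b) = ten (tpow ρ a) (tpow ρ b) := by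
  ext x y
  simp [tpow, ten, Fin.prod_univ_add]

theorem ten_add_left {a b : ℕ} (A A' : Matrix (Fin a → ι) (Fin a → ι) ℂ)
    (B : Matrix (Fin b → ι) (Fin b → ι) ℂ) : ten (A + A') B = ten A B + ten A' B := by
  ext x y; simp [ten, add_mul]

theorem ten_sub_left {a b : ℕ} (A A' : Matrix (Fin a → ι) (Fin a → ι) ℂ)
    (B : Matrix (Fin b → ι) (Fin b → ι) ℂ) : ten (A - A') B = ten A B - ten A' B := by
  ext x y; simp [ten, sub_mul]

theorem ten_sub_right {a b : ℕ} (A : Matrix (Fin a → ι) (Fin a → ι) ℂ)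
    (B B' : Matrix (Fin b → ι) (Fin b → ι) ℂ) : ten A (B - B') = ten A B - ten A B' := by
  ext x y; simp [ten, mul_sub]

theorem ten_sum_left {a b : ℕ} {m : Type*} [Fintype m]
    (A : m → Matrix (Fin a → ι) (Fin a → ι) ℂ)
    (B : Matrix (Fin b → ι) (Fin b → ι) ℂ) : ten (∑ k, A k) B = ∑ k, ten (A k) B := by
  ext x y; simp [ten, Matrix.sum_apply, Finset.sum_mul]

theorem ten_sum_right {a b : ℕ} {m : Type*} [Fintype m]
    (A : Matrix (Fin a → ι) (Fin a → ι) ℂ)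
    (B : m → Matrix (Fin b → ι) (Fin b → ι) ℂ) : ten A (∑ k, B k) = ∑ k, ten A (B k) := by
  ext x y; simp [ten, Matrix.sum_apply, Finset.mul_sum]

variable [Fintype ι] [DecidableEq ι]

theorem ten_one {a b : ℕ} : ten (1 : Matrix (Fin a → ι) (Fin a → ι) ℂ)
    (1 : Matrix (Fin b → ι) (Fin b → ι) ℂ) = 1 := by
  rw [ten_eq, Matrix.one_kronecker_one, Matrix.submatrix_one_equiv]

theorem ten_mul {a b : ℕ} (A A' : Matrix (Fin a → ι) (Fin a → ι) ℂ)
    (B B' : Matrix (Fin b → ι) (Fin b → ι) ℂ) :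
    ten A B * ten A' B' = ten (A * A') (B * B') := by
  rw [ten_eq, ten_eq, ten_eq, Matrix.submatrix_mul_equiv, Matrix.mul_kronecker_mul]

theorem trace_submatrix_equiv {κ κ' : Type*} [Fintype κ] [Fintype κ'] (e : κ ≃ κ')
    (A : Matrix κ' κ' ℂ) : (A.submatrix e e).trace = A.trace := by
  simp only [Matrix.trace, Matrix.diag, Matrix.submatrix_apply]
  exact e.sum_comp (fun i => A i i)

theorem ten_trace {a b : ℕ} (A : Matrix (Fin a → ι) (Fin a → ι) ℂ)
    (B : Matrix (Fin b → ι) (Fin b → ι) ℂ) : (ten A B).trace = A.trace * B.trace := by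
  rw [ten_eq, trace_submatrix_equiv, Matrix.trace_kronecker]

theorem ten_psd {a b : ℕ} {A : Matrix (Fin a → ι) (Fin a → ι) ℂ}
    {B : Matrix (Fin b → ι) (Fin b → ι) ℂ} (hA : A.PosSemidef) (hB : B.PosSemidef) :
    (ten A B).PosSemidef := by
  rw [ten_eq]
  exact (hA.kronecker hB).submatrix _

theorem IsTester.compl {κ : Type*} [Fintype κ] [DecidableEq κ] {T : Matrix κ κ ℂ}
    (h : IsTester T) : IsTester (1 - T) := ⟨h.2, by simpa using h.1⟩

theorem isTester_one {κ : Type*} [Fintype κ] [DecidableEq κ] :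
    IsTester (1 : Matrix κ κ ℂ) := ⟨Matrix.PosSemidef.one, by simpa using Matrix.PosSemidef.zero⟩

theorem ten_tester {a b : ℕ} {A : Matrix (Fin a → ι) (Fin a → ι) ℂ}
    {B : Matrix (Fin b → ι) (Fin b → ι) ℂ} (hA : IsTester A) (hB : IsTester B) :
    IsTester (ten A B) := by
  refine ⟨ten_psd hA.1 hB.1, ?_⟩
  have : (1 : Matrix (Fin (a + b) → ι) (Fin (a + b) → ι) ℂ) - ten A B
      = ten (1 - A) 1 + ten A (1 - B) := by
    rw [ten_sub_left, ten_sub_right, ten_one]; abel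
  rw [this]
  exact (ten_psd hA.2 Matrix.PosSemidef.one).add (ten_psd hA.1 hB.2)

theorem ten_tester_ite {a b : ℕ} {A : Matrix (Fin a → ι) (Fin a → ι) ℂ}
    {B C : Matrix (Fin b → ι) (Fin b → ι) ℂ} (hA : IsTester A) (hB : IsTester B)
    (hC : IsTester C) : IsTester (ten A B + ten (1 - A) C) := by
  refine ⟨(ten_psd hA.1 hB.1).add (ten_psd hA.2 hC.1), ?_⟩
  have : (1 : Matrix (Fin (a + b) → ι) (Fin (a + b) → ι) ℂ) - (ten A B + ten (1 - A) C)
      = ten A (1 - B) + ten (1 - A) (1 - C) := by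
    rw [ten_sub_left, ten_sub_right, ten_sub_right, ten_sub_left, ten_sub_left, ten_one]; abel
  rw [this]
  exact (ten_psd hA.1 hB.2).add (ten_psd hA.2 hC.2)

theorem psd_factor {κ : Type*} [Fintype κ] [DecidableEq κ] {A : Matrix κ κ ℂ}
    (hA : A.PosSemidef) : ∃ C : Matrix κ κ ℂ, A = Cᴴ * C := by
  open scoped MatrixOrder in
  exact CStarAlgebra.nonneg_iff_eq_star_mul_self.mp hA.nonneg

theorem trace_mul_psd {κ : Type*} [Fintype κ] [DecidableEq κ] {A B : Matrix κ κ ℂ}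
    (hA : A.PosSemidef) (hB : B.PosSemidef) : 0 ≤ (A * B).trace := by
  obtain ⟨C, rfl⟩ := psd_factor hB
  rw [← mul_assoc, Matrix.trace_mul_comm, ← mul_assoc]
  exact (hA.mul_mul_conjTranspose_same C).trace_nonneg

theorem tpow_zero (ρ : Matrix ι ι ℂ) : tpow ρ 0 = 1 := by
  ext x y
  simp [tpow, Matrix.one_apply, Subsingleton.elim x y]

theorem tpow_one_eq (ρ : Matrix ι ι ℂ) :
    tpow ρ 1 = ρ.submatrix (fun x => x 0) (fun x => x 0) := by
  ext x y
  simp [tpow]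

theorem tpow_psd {ρ : Matrix ι ι ℂ} (h : ρ.PosSemidef) (n : ℕ) : (tpow ρ n).PosSemidef := by
  induction n with
  | zero => rw [tpow_zero]; exact Matrix.PosSemidef.one
  | succ n ih =>
    rw [tpow_add]
    refine ten_psd ih ?_
    rw [tpow_one_eq]
    exact h.submatrix _

theorem tpow_trace (ρ : Matrix ι ι ℂ) (n : ℕ) : (tpow ρ n).trace = ρ.trace ^ n := by
  induction n with
  | zero => rw [tpow_zero]; simp
  | succ n ih =>
    rw [tpow_add, ten_trace, ih, pow_succ, tpow_one_eq]
    congr 1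
    exact trace_submatrix_equiv (Equiv.funUnique (Fin 1) ι) ρ

theorem tpow_mono {A B : Matrix ι ι ℂ} (hA : A.PosSemidef) (hB : (B - A).PosSemidef) (n : ℕ) :
    (tpow B n - tpow A n).PosSemidef := by
  have hB' : B.PosSemidef := by simpa using hB.add hA
  induction n with
  | zero => rw [tpow_zero, tpow_zero]; simpa using Matrix.PosSemidef.zero
  | succ n ih =>
    have : tpow B (n + 1) - tpow A (n + 1)
        = ten (tpow B n - tpow A n) (tpow B 1) + ten (tpow A n) (tpow B 1 - tpow A 1) := by
      rw [tpow_add, tpow_add, ten_sub_left, ten_sub_right]; abel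
    rw [this]
    refine (ten_psd ih (tpow_psd hB' 1)).add (ten_psd (tpow_psd hA n) ?_)
    rw [tpow_one_eq, tpow_one_eq]
    exact hB.submatrix (fun x : Fin 1 → ι => x 0)

theorem tpow_smul (w : ℂ) (A : Matrix ι ι ℂ) (n : ℕ) : tpow (w • A) n = w ^ n • tpow A n := by
  ext x y
  simp [tpow, Finset.prod_mul_distrib]

theorem acc_cast {n : ℕ} {T : Matrix (Fin n → ι) (Fin n → ι) ℂ} {ρ : Matrix ι ι ℂ}
    (hT : T.PosSemidef) (hρ : ρ.PosSemidef) : (T * tpow ρ n).trace = (acc T ρ : ℂ) := by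
  have := trace_mul_psd hT (tpow_psd hρ n)
  rw [Complex.nonneg_iff] at this
  apply Complex.ext
  · simp [acc]
  · simp [this.2]

theorem acc_nonneg {n : ℕ} {T : Matrix (Fin n → ι) (Fin n → ι) ℂ} {ρ : Matrix ι ι ℂ}
    (hT : T.PosSemidef) (hρ : ρ.PosSemidef) : 0 ≤ acc T ρ :=
  (Complex.nonneg_iff.mp (trace_mul_psd hT (tpow_psd hρ n))).1

theorem acc_one {n : ℕ} {ρ : Matrix ι ι ℂ} (hρ : IsDensity ρ) :
    acc (1 : Matrix (Fin n → ι) (Fin n → ι) ℂ) ρ = 1 := by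
  simp [acc, tpow_trace, hρ.2]

theorem acc_add {n : ℕ} (T S : Matrix (Fin n → ι) (Fin n → ι) ℂ) (ρ : Matrix ι ι ℂ) :
    acc (T + S) ρ = acc T ρ + acc S ρ := by
  simp [acc, add_mul]

theorem acc_sub {n : ℕ} (T S : Matrix (Fin n → ι) (Fin n → ι) ℂ) (ρ : Matrix ι ι ℂ) :
    acc (T - S) ρ = acc T ρ - acc S ρ := by
  simp [acc, sub_mul]

theorem acc_le_one {n : ℕ} {T : Matrix (Fin n → ι) (Fin n → ι) ℂ} {ρ : Matrix ι ι ℂ}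
    (hT : IsTester T) (hρ : IsDensity ρ) : acc T ρ ≤ 1 := by
  have h := acc_nonneg hT.2 hρ.1
  rw [acc_sub, acc_one hρ] at h
  linarith

theorem acc_ten {a b : ℕ} {A : Matrix (Fin a → ι) (Fin a → ι) ℂ}
    {B : Matrix (Fin b → ι) (Fin b → ι) ℂ} {ρ : Matrix ι ι ℂ}
    (hA : A.PosSemidef) (hB : B.PosSemidef) (hρ : ρ.PosSemidef) :
    acc (ten A B) ρ = acc A ρ * acc B ρ := by
  rw [acc, tpow_add, ten_mul, ten_trace, acc_cast hA hρ, acc_cast hB hρ]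
  simp

end Tensor

section LOCC

variable {d : ℕ}

theorem locc_ten {a b : ℕ}
    {T : Matrix (Fin a → Fin d × Fin d) (Fin a → Fin d × Fin d) ℂ}
    {S : Matrix (Fin b → Fin d × Fin d) (Fin b → Fin d × Fin d) ℂ}
    (hT : IsOneWayLOCC T) (hS : IsOneWayLOCC S) : IsOneWayLOCC (ten T S) := by
  obtain ⟨m, E, F, hE, hE1, hF, hTE⟩ := hT
  obtain ⟨m', E', F', hE', hE1', hF', hTE'⟩ := hS
  refine ⟨m * m', fun k => ten (E (finProdFinEquiv.symm k).1) (E' (finProdFinEquiv.symm k).2),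
    fun k => ten (F (finProdFinEquiv.symm k).1) (F' (finProdFinEquiv.symm k).2),
    fun k => ten_psd (hE _) (hE' _), ?_, fun k => ten_tester (hF _) (hF' _), ?_⟩
  · rw [finProdFinEquiv.symm.sum_comp (fun p : Fin m × Fin m' => ten (E p.1) (E' p.2)),
      Fintype.sum_prod_type]
    simp_rw [← ten_sum_right, ← ten_sum_left]
    rw [hE1, hE1', ten_one]
  · intro x y
    rw [finProdFinEquiv.symm.sum_comp (fun p : Fin m × Fin m' =>
      ten (F p.1) (F' p.2) (fun i => (x i).1) (fun i => (y i).1) *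
        ten (E p.1) (E' p.2) (fun i => (x i).2) (fun i => (y i).2)),
      Fintype.sum_prod_type]
    simp only [ten, Matrix.of_apply, hTE, hTE', Finset.sum_mul_sum]
    refine Finset.sum_congr rfl fun i _ => Finset.sum_congr rfl fun j _ => ?_
    ring

/-- The swap operator on two samples. -/
noncomputable def swapM (ι : Type*) [Fintype ι] [DecidableEq ι] :
    Matrix (Fin 2 → ι) (Fin 2 → ι) ℂ :=
  Matrix.of fun x y => if x 0 = y 1 ∧ x 1 = y 0 then 1 else 0

theorem swapM_herm (ι : Type*) [Fintype ι] [DecidableEq ι] : (swapM ι)ᴴ = swapM ι := by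
  ext x y
  simp only [swapM, Matrix.conjTranspose_apply, Matrix.of_apply]
  split_ifs with h1 h2 h2
  · simp
  · exact absurd ⟨h1.2.symm, h1.1.symm⟩ h2
  · exact absurd ⟨h2.2.symm, h2.1.symm⟩ h1
  · simp

theorem swapM_mul (ι : Type*) [Fintype ι] [DecidableEq ι] (A : Matrix (Fin 2 → ι) (Fin 2 → ι) ℂ)
    (x y : Fin 2 → ι) : (swapM ι * A) x y = A ![x 1, x 0] y := by
  rw [Matrix.mul_apply, Finset.sum_eq_single ![x 1, x 0]]
  · simp [swapM]
  · intro z _ hz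
    have : ¬ (x 0 = z 1 ∧ x 1 = z 0) := by
      rintro ⟨h1, h2⟩
      apply hz
      ext i
      fin_cases i
      · exact h2.symm
      · exact h1.symm
    simp [swapM, this]
  · simp

theorem swapM_sq (ι : Type*) [Fintype ι] [DecidableEq ι] : swapM ι * swapM ι = 1 := by
  ext x y
  rw [swapM_mul]
  simp only [swapM, Matrix.of_apply, Matrix.one_apply]
  congr 1
  simp only [Matrix.cons_val_zero, Matrix.cons_val_one, eq_iff_iff]
  constructor
  · rintro ⟨h1, h2⟩
    ext i
    fin_cases i
    · exact h2
    · exact h1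
  · rintro rfl
    exact ⟨rfl, rfl⟩

theorem half_inv_psd {κ : Type*} [Fintype κ] [DecidableEq κ] {S : Matrix κ κ ℂ}
    (h1 : Sᴴ = S) (h2 : S * S = 1) : ((1 / 2 : ℂ) • (1 + S)).PosSemidef := by
  have : (1 / 2 : ℂ) • (1 + S) = ((1 / 2 : ℂ) • (1 + S))ᴴ * ((1 / 2 : ℂ) • (1 + S)) := by
    have h3 : ((1 / 2 : ℂ) • (1 + S))ᴴ = (1 / 2 : ℂ) • (1 + S) := by
      simp [Matrix.conjTranspose_smul, h1]
    rw [h3, smul_mul_smul_comm, add_mul, mul_add, mul_add, h2]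
    simp only [one_mul, mul_one]
    module
  rw [this]
  exact Matrix.posSemidef_conjTranspose_mul_self _

theorem half_inv_tester {κ : Type*} [Fintype κ] [DecidableEq κ] {S : Matrix κ κ ℂ}
    (h1 : Sᴴ = S) (h2 : S * S = 1) : IsTester ((1 / 2 : ℂ) • (1 + S)) := by
  refine ⟨half_inv_psd h1 h2, ?_⟩
  have : (1 : Matrix κ κ ℂ) - (1 / 2 : ℂ) • (1 + S) = (1 / 2 : ℂ) • (1 + (-S)) := by module
  rw [this]
  exact half_inv_psd (by simp [h1]) (by simp [h2])

/-- The swap test. -/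
noncomputable def swapT (ι : Type*) [Fintype ι] [DecidableEq ι] :
    Matrix (Fin 2 → ι) (Fin 2 → ι) ℂ := (1 / 2 : ℂ) • (1 + swapM ι)

theorem swapT_tester (ι : Type*) [Fintype ι] [DecidableEq ι] : IsTester (swapT ι) :=
  half_inv_tester (swapM_herm ι) (swapM_sq ι)

theorem swapT_locc : IsOneWayLOCC (swapT (Fin d × Fin d)) := by
  refine ⟨2, ![swapT (Fin d), 1 - swapT (Fin d)], ![swapT (Fin d), 1 - swapT (Fin d)],
    ?_, ?_, ?_, ?_⟩
  · intro k
    fin_cases k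
    · exact (swapT_tester _).1
    · exact (swapT_tester _).2
  · simp
  · intro k
    fin_cases k
    · exact swapT_tester _
    · exact (swapT_tester _).compl
  · intro x y
    have h1 : (1 : Matrix (Fin 2 → Fin d × Fin d) (Fin 2 → Fin d × Fin d) ℂ) x y =
        (1 : Matrix (Fin 2 → Fin d) (Fin 2 → Fin d) ℂ) (fun i => (x i).1) (fun i => (y i).1) *
        (1 : Matrix (Fin 2 → Fin d) (Fin 2 → Fin d) ℂ) (fun i => (x i).2) (fun i => (y i).2) := by
      simp only [Matrix.one_apply, ← ite_and, mul_ite, mul_one, mul_zero]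
      congr 1
      simp only [funext_iff, Prod.ext_iff, eq_iff_iff]
      grind
    have h2 : swapM (Fin d × Fin d) x y =
        swapM (Fin d) (fun i => (x i).1) (fun i => (y i).1) *
        swapM (Fin d) (fun i => (x i).2) (fun i => (y i).2) := by
      simp only [swapM, Matrix.of_apply, ← ite_and, mul_ite, mul_one, mul_zero]
      congr 1
      simp only [Prod.ext_iff, eq_iff_iff]
      grind
    simp only [Fin.sum_univ_two, Matrix.cons_val_zero, Matrix.cons_val_one, swapT,
      Matrix.smul_apply, Matrix.add_apply, Matrix.sub_apply, smul_eq_mul, h1, h2]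
    ring

theorem swapT_acc {ι : Type*} [Fintype ι] [DecidableEq ι] {ρ : Matrix ι ι ℂ}
    (hρ : IsDensity ρ) : acc (swapT ι) ρ = (1 + ((ρ * ρ).trace).re) / 2 := by
  have h : (swapM ι * tpow ρ 2).trace = (ρ * ρ).trace := by
    simp only [Matrix.trace, Matrix.diag, swapM_mul]
    simp only [Matrix.mul_apply]
    rw [← (finTwoArrowEquiv ι).symm.sum_comp, Fintype.sum_prod_type]
    refine Finset.sum_congr rfl fun i _ => Finset.sum_congr rfl fun j _ => ?_
    simp [tpow, finTwoArrowEquiv, mul_comm]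
  have h1 : (tpow ρ 2).trace = 1 := by rw [tpow_trace, hρ.2, one_pow]
  rw [acc, swapT, smul_mul_assoc, Matrix.trace_smul, add_mul, Matrix.trace_add, h, one_mul, h1]
  simp
  ring

/-- `m` parallel swap tests. -/
theorem swap_power (m : ℕ) :
    ∃ T : Matrix (Fin (2 * m) → Fin d × Fin d) (Fin (2 * m) → Fin d × Fin d) ℂ,
      IsTester T ∧ IsOneWayLOCC T ∧
        ∀ ρ, IsDensity ρ → acc T ρ = ((1 + ((ρ * ρ).trace).re) / 2) ^ m := by
  induction m with
  | zero =>
    refine ⟨1, isTester_one, ⟨1, fun _ => 1, fun _ => 1, fun _ => Matrix.PosSemidef.one, by simp,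
      fun _ => isTester_one, ?_⟩, fun ρ hρ => by rw [acc_one hρ, pow_zero]⟩
    intro x y
    have : x = y := by funext i; exact i.elim0
    subst this
    simp
  | succ m ih =>
    obtain ⟨T, h1, h2, h3⟩ := ih
    refine ⟨ten T (swapT _), ten_tester h1 (swapT_tester _), locc_ten h2 swapT_locc, ?_⟩
    intro ρ hρ
    rw [acc_ten h1.1 (swapT_tester _).1 hρ.1, h3 ρ hρ, swapT_acc hρ, pow_succ]

/-- Separating Alice's and Bob's registers. -/
def sepE (d N : ℕ) : (Fin N → Fin d × Fin d) ≃ (Fin N → Fin d) × (Fin N → Fin d) :=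
  Equiv.arrowProdEquivProdArrow (Fin N) (fun _ => Fin d) (fun _ => Fin d)

theorem localA_eq {N : ℕ} (M : Matrix (Fin N → Fin d) (Fin N → Fin d) ℂ) :
    localA M = (M ⊗ₖ (1 : Matrix (Fin N → Fin d) (Fin N → Fin d) ℂ)).submatrix
      (sepE d N) (sepE d N) := by
  ext x y
  simp [localA, sepE, Matrix.one_apply]

theorem localA_one {N : ℕ} :
    localA (1 : Matrix (Fin N → Fin d) (Fin N → Fin d) ℂ) = 1 := by
  rw [localA_eq, Matrix.one_kronecker_one, Matrix.submatrix_one_equiv]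

theorem localA_add {N : ℕ} (M M' : Matrix (Fin N → Fin d) (Fin N → Fin d) ℂ) :
    localA (M + M') = localA M + localA M' := by
  ext x y; simp only [localA, Matrix.of_apply, Matrix.add_apply, add_mul]

theorem localA_sub {N : ℕ} (M M' : Matrix (Fin N → Fin d) (Fin N → Fin d) ℂ) :
    localA (M - M') = localA M - localA M' := by
  ext x y; simp only [localA, Matrix.of_apply, Matrix.sub_apply, sub_mul]

theorem localA_psd {N : ℕ} {M : Matrix (Fin N → Fin d) (Fin N → Fin d) ℂ}
    (h : M.PosSemidef) : (localA M).PosSemidef := by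
  rw [localA_eq]
  exact (h.kronecker Matrix.PosSemidef.one).submatrix _

theorem localA_tester {N : ℕ} {M : Matrix (Fin N → Fin d) (Fin N → Fin d) ℂ}
    (h : IsTester M) : IsTester (localA M) := by
  refine ⟨localA_psd h.1, ?_⟩
  rw [← localA_one, ← localA_sub]
  exact localA_psd h.2

theorem localA_locc {N : ℕ} {M : Matrix (Fin N → Fin d) (Fin N → Fin d) ℂ}
    (h : IsTester M) : IsOneWayLOCC (localA M) := by
  refine ⟨1, fun _ => 1, fun _ => M, fun _ => Matrix.PosSemidef.one, by simp, fun _ => h, ?_⟩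
  intro x y
  simp [localA, Matrix.one_apply]

theorem localA_ten {a b : ℕ} (A : Matrix (Fin a → Fin d) (Fin a → Fin d) ℂ)
    (B : Matrix (Fin b → Fin d) (Fin b → Fin d) ℂ) :
    localA (ten A B) = ten (localA A) (localA B) := by
  have h1 : ten (localA A) (localA B) = Matrix.of fun x y =>
    (ten A B) (fun i => (x i).1) (fun i => (y i).1) *
    (ten 1 1 : Matrix (Fin (a + b) → Fin d) (Fin (a + b) → Fin d) ℂ)
      (fun i => (x i).2) (fun i => (y i).2) := by
    ext x y
    simp only [ten, localA, Matrix.of_apply, Matrix.one_apply]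
    ring
  rw [h1, ten_one]
  ext x y
  simp only [localA, Matrix.of_apply, Matrix.one_apply]

/-- The binomial tail: probability of at most `r` failures among `k` trials with
success probability `p`. -/
noncomputable def btail : ℕ → ℕ → ℝ → ℝ
  | 0, _, _ => 1
  | k + 1, 0, p => p * btail k 0 p
  | k + 1, r + 1, p => p * btail k (r + 1) p + (1 - p) * btail k r p

theorem amplify {N : ℕ} {M : Matrix (Fin N → Fin d) (Fin N → Fin d) ℂ} (hM : IsTester M)
    (k : ℕ) : ∀ r : ℕ, ∃ Q : Matrix (Fin (N * k) → Fin d) (Fin (N * k) → Fin d) ℂ,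
      IsTester Q ∧ ∀ ρ, IsDensity ρ → acc (localA Q) ρ = btail k r (acc (localA M) ρ) := by
  induction k with
  | zero =>
    intro r
    refine ⟨1, isTester_one, fun ρ hρ => ?_⟩
    rw [localA_one, acc_one hρ, btail]
  | succ k ih =>
    have key : ∀ Q Q' : Matrix (Fin (N * k) → Fin d) (Fin (N * k) → Fin d) ℂ,
        IsTester Q → IsTester Q' →
        ∃ Q'' : Matrix (Fin (N * (k + 1)) → Fin d) (Fin (N * (k + 1)) → Fin d) ℂ, IsTester Q'' ∧
          ∀ ρ, IsDensity ρ → acc (localA Q'') ρ = acc (localA M) ρ * acc (localA Q) ρ +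
            (1 - acc (localA M) ρ) * acc (localA Q') ρ := by
      intro Q Q' hQ hQ'
      have : N * (k + 1) = N + N * k := by ring
      rw [this]
      refine ⟨_, ten_tester_ite hM hQ hQ', fun ρ hρ => ?_⟩
      rw [localA_add, acc_add, localA_ten, localA_ten, acc_ten (localA_psd hM.1)
        (localA_psd hQ.1) hρ.1, acc_ten (localA_psd hM.2) (localA_psd hQ'.1) hρ.1, localA_sub,
        acc_sub, localA_one, acc_one hρ]
    intro r
    cases r with
    | zero =>
      obtain ⟨Q, hQ, h⟩ := ih 0
      obtain ⟨Q'', h1, h2⟩ := key Q 0 hQ ⟨Matrix.PosSemidef.zero, by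
        simpa using Matrix.PosSemidef.one⟩
      refine ⟨Q'', h1, fun ρ hρ => ?_⟩
      have h0 : acc (localA (0 : Matrix (Fin (N * k) → Fin d) (Fin (N * k) → Fin d) ℂ)) ρ = 0 := by
        have : localA (0 : Matrix (Fin (N * k) → Fin d) (Fin (N * k) → Fin d) ℂ) = 0 := by
          ext x y; simp [localA]
        rw [this]; simp [acc]
      rw [h2 ρ hρ, h0, h ρ hρ, btail]; ring
    | succ r =>
      obtain ⟨Q, hQ, h⟩ := ih (r + 1)
      obtain ⟨Q', hQ', h'⟩ := ih r
      obtain ⟨Q'', h1, h2⟩ := key Q Q' hQ hQ'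
      refine ⟨Q'', h1, fun ρ hρ => ?_⟩
      rw [h2 ρ hρ, h ρ hρ, h' ρ hρ, btail]

end LOCC

theorem btail_chernoff (p θ : ℝ) (hp0 : 0 ≤ p) (hp1 : p ≤ 1) (hθ : 0 ≤ θ) (k : ℕ) :
    ∀ r : ℕ, btail k r p ≤ Real.exp (θ * r) * (p + (1 - p) * Real.exp (-θ)) ^ k := by
  have hG : 0 ≤ p + (1 - p) * Real.exp (-θ) :=
    add_nonneg hp0 (mul_nonneg (by linarith) (Real.exp_pos _).le)
  induction k with
  | zero =>
    intro r
    simp only [btail, pow_zero, mul_one]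
    exact Real.one_le_exp (by positivity)
  | succ k ih =>
    intro r
    cases r with
    | zero =>
      simp only [btail, pow_succ]
      have h := mul_le_mul_of_nonneg_left (ih 0) hp0
      have h2 : 0 ≤ (p + (1 - p) * Real.exp (-θ)) ^ k * ((1 - p) * Real.exp (-θ)) :=
        mul_nonneg (pow_nonneg hG k) (mul_nonneg (by linarith) (Real.exp_pos _).le)
      simp only [Nat.cast_zero, mul_zero, Real.exp_zero, one_mul] at h ⊢
      nlinarith
    | succ r =>
      simp only [btail, pow_succ]
      have h := mul_le_mul_of_nonneg_left (ih (r + 1)) hp0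
      have h' := mul_le_mul_of_nonneg_left (ih r) (by linarith : 0 ≤ 1 - p)
      have he : Real.exp (θ * r) = Real.exp (θ * (r + 1 : ℕ)) * Real.exp (-θ) := by
        rw [← Real.exp_add]; congr 1; push_cast; ring
      rw [he] at h'
      calc _ ≤ _ := add_le_add h h'
        _ = _ := by ring

theorem btail_chebyshev (p : ℝ) (hp0 : 0 ≤ p) (hp1 : p ≤ 1) (k : ℕ) :
    ∀ (r : ℕ) (a : ℝ), a < r + 1 →
      (1 - btail k r p) * (r + 1 - a) ^ 2 ≤ k * p * (1 - p) + (k * (1 - p) - a) ^ 2 := by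
  induction k with
  | zero =>
    intro r a _
    simp only [btail]
    have : 0 ≤ a ^ 2 := sq_nonneg a
    norm_num
    exact this
  | succ k ih =>
    intro r a ha
    have hq : 0 ≤ 1 - p := by linarith
    cases r with
    | zero =>
      have h := mul_le_mul_of_nonneg_left (ih 0 a ha) hp0
      have h2 : (0 - (a - 1)) ^ 2 ≤ k * p * (1 - p) + (k * (1 - p) - (a - 1)) ^ 2 := by
        have h3 : (0 : ℝ) ≤ k * (1 - p) := by positivity
        have h4 : 0 ≤ k * (1 - p) * p := by positivity
        have h5 : a < 1 := by simpa using ha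
        nlinarith [mul_nonneg h3 (by linarith : 0 ≤ 1 - a)]
      have h' := mul_le_mul_of_nonneg_left h2 hq
      simp only [btail]
      push_cast at h h' ⊢
      linarith
    | succ r =>
      push_cast at ha
      have h := mul_le_mul_of_nonneg_left (ih (r + 1) a (by push_cast; linarith)) hp0
      have h' := mul_le_mul_of_nonneg_left (ih r (a - 1) (by linarith)) hq
      simp only [btail]
      push_cast at h h' ⊢
      linarith

section Twirl

theorem tpow_mul {ι : Type*} [Fintype ι] [DecidableEq ι] (A B : Matrix ι ι ℂ) (n : ℕ) :
    tpow (A * B) n = tpow A n * tpow B n := by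
  ext x y
  simp only [tpow, Matrix.of_apply, Matrix.mul_apply, ← Finset.prod_mul_distrib]
  rw [Finset.prod_univ_sum, Fintype.piFinset_univ]

theorem tpow_conjTranspose {ι : Type*} (A : Matrix ι ι ℂ) (n : ℕ) :
    (tpow A n)ᴴ = tpow Aᴴ n := by
  ext x y
  simp [tpow]

theorem tpow_transpose {ι : Type*} (A : Matrix ι ι ℂ) (n : ℕ) :
    (tpow A n)ᵀ = tpow Aᵀ n := by
  ext x y
  simp [tpow]

theorem tpow_diagonal {ι : Type*} [Fintype ι] [DecidableEq ι] (z : ι → ℂ) (n : ℕ) :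
    tpow (Matrix.diagonal z) n = Matrix.diagonal (fun x => ∏ i, z (x i)) := by
  ext x y
  simp only [tpow, Matrix.of_apply, Matrix.diagonal_apply]
  split_ifs with h
  · subst h; simp
  · obtain ⟨i, hi⟩ := Function.ne_iff.mp h
    exact Finset.prod_eq_zero (Finset.mem_univ i) (by simp [hi])

theorem tpow_one_mat {ι : Type*} [Fintype ι] [DecidableEq ι] (n : ℕ) :
    tpow (1 : Matrix ι ι ℂ) n = 1 := by
  rw [← Matrix.diagonal_one, tpow_diagonal]
  simp

theorem isClosed_psd {κ : Type*} [Fintype κ] [DecidableEq κ] :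
    IsClosed {T : Matrix κ κ ℂ | T.PosSemidef} := by
  have : {T : Matrix κ κ ℂ | T.PosSemidef} =
      {T | Tᴴ = T} ∩ ⋂ x : κ → ℂ, {T | 0 ≤ star x ⬝ᵥ (T *ᵥ x)} := by
    ext T
    simp [Matrix.posSemidef_iff_dotProduct_mulVec, Matrix.IsHermitian]
  rw [this]
  refine IsClosed.inter (isClosed_eq (by fun_prop) (by fun_prop)) (isClosed_iInter fun x => ?_)
  exact isClosed_le (by fun_prop) (by fun_prop)

/-- The squared Frobenius norm. -/
noncomputable def frob {κ : Type*} [Fintype κ] (T : Matrix κ κ ℂ) : ℝ := ((Tᴴ * T).trace).re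

theorem frob_eq {κ : Type*} [Fintype κ] (T : Matrix κ κ ℂ) :
    frob T = ∑ j, ∑ i, Complex.normSq (T i j) := by
  simp only [frob, Matrix.trace, Matrix.diag, Matrix.mul_apply, Complex.re_sum,
    Matrix.conjTranspose_apply]
  refine Finset.sum_congr rfl fun j _ => Finset.sum_congr rfl fun i _ => ?_
  simp [Complex.normSq_apply]

theorem frob_tester {κ : Type*} [Fintype κ] [DecidableEq κ] {T : Matrix κ κ ℂ}
    (hT : IsTester T) : frob T ≤ Fintype.card κ := by
  have h1 := (Complex.nonneg_iff.mp (trace_mul_psd hT.1 hT.2)).1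
  have h2 := (Complex.nonneg_iff.mp hT.2.trace_nonneg).1
  have h3 : frob T = ((T * T).trace).re := by rw [frob, hT.1.1.eq]
  rw [mul_sub, mul_one, Matrix.trace_sub, Complex.sub_re] at h1
  rw [Matrix.trace_sub, Complex.sub_re, Matrix.trace_one] at h2
  simp at h2
  linarith

theorem frob_mid {κ : Type*} [Fintype κ] (T S : Matrix κ κ ℂ) :
    frob (T - S) = 2 * frob T + 2 * frob S - 4 * frob ((1 / 2 : ℂ) • (T + S)) := by
  simp only [frob_eq, Finset.mul_sum, ← Finset.sum_add_distrib, ← Finset.sum_sub_distrib]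
  refine Finset.sum_congr rfl fun j _ => Finset.sum_congr rfl fun i _ => ?_
  simp [Complex.normSq_apply]
  ring

theorem frob_eq_zero {κ : Type*} [Fintype κ] {T : Matrix κ κ ℂ} (h : frob T ≤ 0) : T = 0 := by
  rw [frob_eq] at h
  have h0 : ∑ j, ∑ i, Complex.normSq (T i j) = 0 :=
    le_antisymm h (Finset.sum_nonneg fun j _ => Finset.sum_nonneg fun i _ => Complex.normSq_nonneg _)
  ext i j
  rw [Finset.sum_eq_zero_iff_of_nonneg
    (fun j _ => Finset.sum_nonneg fun i _ => Complex.normSq_nonneg _)] at h0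
  have h1 := h0 j (Finset.mem_univ j)
  rw [Finset.sum_eq_zero_iff_of_nonneg (fun i _ => Complex.normSq_nonneg _)] at h1
  simpa using h1 i (Finset.mem_univ i)

theorem isCompact_tester {κ : Type*} [Fintype κ] [DecidableEq κ] :
    IsCompact {T : Matrix κ κ ℂ | IsTester T} := by
  have hc : IsCompact (Set.pi Set.univ fun _ : κ => Set.pi Set.univ fun _ : κ =>
      Metric.closedBall (0 : ℂ) (Fintype.card κ + 1)) :=
    isCompact_univ_pi fun _ => isCompact_univ_pi fun _ => isCompact_closedBall _ _
  refine IsCompact.of_isClosed_subset (X := Matrix κ κ ℂ) hc ?_ ?_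
  · have : {T : Matrix κ κ ℂ | IsTester T} =
      {T | T.PosSemidef} ∩ (fun T => 1 - T) ⁻¹' {T | T.PosSemidef} := rfl
    rw [this]
    exact isClosed_psd.inter (isClosed_psd.preimage (by fun_prop))
  · intro T hT i _ j _
    have h := frob_tester hT
    rw [frob_eq] at h
    have h1 : Complex.normSq (T i j) ≤ ∑ j, ∑ i, Complex.normSq (T i j) :=
      (Finset.single_le_sum (f := fun i => Complex.normSq (T i j))
        (fun i _ => Complex.normSq_nonneg _) (Finset.mem_univ i)).trans
        (Finset.single_le_sum (f := fun j => ∑ i, Complex.normSq (T i j))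
        (fun j _ => Finset.sum_nonneg fun i _ => Complex.normSq_nonneg _) (Finset.mem_univ j))
    rw [Complex.normSq_eq_norm_sq] at h1
    rw [mem_closedBall_zero_iff]
    nlinarith [norm_nonneg (T i j)]

theorem acc_conj {ι : Type*} [Fintype ι] [DecidableEq ι] {n : ℕ}
    (T : Matrix (Fin n → ι) (Fin n → ι) ℂ) (W ρ : Matrix ι ι ℂ) :
    acc (tpow W n * T * (tpow W n)ᴴ) ρ = acc T (Wᴴ * ρ * W) := by
  rw [acc, acc, tpow_mul, tpow_mul, tpow_conjTranspose, mul_assoc, mul_assoc,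
    Matrix.trace_mul_comm]
  simp only [mul_assoc]

theorem twirl {d N : ℕ}
    (Pyes Pno : Set (Matrix (Fin d × Fin d) (Fin d × Fin d) ℂ))
    (hinvyes : ∀ U ∈ Matrix.unitaryGroup (Fin d) ℂ, ∀ ρ ∈ Pyes,
      ((1 : Matrix (Fin d) (Fin d) ℂ) ⊗ₖ U) * ρ * ((1 : Matrix (Fin d) (Fin d) ℂ) ⊗ₖ U)ᴴ ∈ Pyes)
    (hinvno : ∀ U ∈ Matrix.unitaryGroup (Fin d) ℂ, ∀ ρ ∈ Pno,
      ((1 : Matrix (Fin d) (Fin d) ℂ) ⊗ₖ U) * ρ * ((1 : Matrix (Fin d) (Fin d) ℂ) ⊗ₖ U)ᴴ ∈ Pno)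
    (c s : ℝ)
    (hexists : ∃ T : Matrix (Fin N → Fin d × Fin d) (Fin N → Fin d × Fin d) ℂ,
      IsTester T ∧ (∀ ρ ∈ Pyes, c ≤ acc T ρ) ∧ (∀ ρ ∈ Pno, acc T ρ ≤ s)) :
    ∃ T : Matrix (Fin N → Fin d × Fin d) (Fin N → Fin d × Fin d) ℂ,
      IsTester T ∧ (∀ ρ ∈ Pyes, c ≤ acc T ρ) ∧ (∀ ρ ∈ Pno, acc T ρ ≤ s) ∧
      ∀ U ∈ Matrix.unitaryGroup (Fin d) ℂ,
        tpow ((1 : Matrix (Fin d) (Fin d) ℂ) ⊗ₖ U) N * T =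
          T * tpow ((1 : Matrix (Fin d) (Fin d) ℂ) ⊗ₖ U) N := by
  have hcont : ∀ ρ : Matrix (Fin d × Fin d) (Fin d × Fin d) ℂ, Continuous
      (fun T : Matrix (Fin N → Fin d × Fin d) (Fin N → Fin d × Fin d) ℂ => acc T ρ) := by
    intro ρ
    unfold acc
    fun_prop
  set S : Set (Matrix (Fin N → Fin d × Fin d) (Fin N → Fin d × Fin d) ℂ) :=
    {T | IsTester T ∧ (∀ ρ ∈ Pyes, c ≤ acc T ρ) ∧ (∀ ρ ∈ Pno, acc T ρ ≤ s)} with hS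
  have hSc : IsCompact S := by
    have : S = {T | IsTester T} ∩ ((⋂ ρ ∈ Pyes, {T | c ≤ acc T ρ}) ∩
        (⋂ ρ ∈ Pno, {T | acc T ρ ≤ s})) := by
      ext T; simp [hS]
    rw [this]
    refine isCompact_tester.inter_right (IsClosed.inter ?_ ?_)
    · exact isClosed_biInter fun ρ _ => isClosed_le continuous_const (hcont ρ)
    · exact isClosed_biInter fun ρ _ => isClosed_le (hcont ρ) continuous_const
  have hfr : Continuous (frob (κ := Fin N → Fin d × Fin d)) := by
    unfold frob
    fun_prop
  obtain ⟨T, hT, hmin⟩ := hSc.exists_isMinOn (f := frob) hexists hfr.continuousOn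
  refine ⟨T, hT.1, hT.2.1, hT.2.2, fun U hU => ?_⟩
  set V := tpow ((1 : Matrix (Fin d) (Fin d) ℂ) ⊗ₖ U) N with hV
  have hUU : U * Uᴴ = 1 := Matrix.mem_unitaryGroup_iff.mp hU
  have hUU' : Uᴴ * U = 1 := Matrix.mem_unitaryGroup_iff'.mp hU
  have hVV : V * Vᴴ = 1 := by
    rw [hV, tpow_conjTranspose, ← tpow_mul, Matrix.conjTranspose_kronecker,
      ← Matrix.mul_kronecker_mul, hUU]
    simp [tpow_one_mat]
  have hVV' : Vᴴ * V = 1 := by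
    rw [hV, tpow_conjTranspose, ← tpow_mul, Matrix.conjTranspose_kronecker,
      ← Matrix.mul_kronecker_mul, hUU']
    simp [tpow_one_mat]
  have hT' : V * T * Vᴴ ∈ S := by
    have hUs : Uᴴ ∈ Matrix.unitaryGroup (Fin d) ℂ := by
      rw [Matrix.mem_unitaryGroup_iff, Matrix.star_eq_conjTranspose,
        Matrix.conjTranspose_conjTranspose, hUU']
    refine ⟨⟨hT.1.1.mul_mul_conjTranspose_same V, ?_⟩, ?_, ?_⟩
    · have : 1 - V * T * Vᴴ = V * (1 - T) * Vᴴ := by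
        rw [mul_sub, sub_mul, mul_one, hVV]
      rw [this]
      exact hT.1.2.mul_mul_conjTranspose_same V
    · intro ρ hρ
      rw [hV, acc_conj]
      have := hT.2.1 _ (hinvyes _ hUs ρ hρ)
      simpa [Matrix.conjTranspose_kronecker] using this
    · intro ρ hρ
      rw [hV, acc_conj]
      have := hT.2.2 _ (hinvno _ hUs ρ hρ)
      simpa [Matrix.conjTranspose_kronecker] using this
  have hmidacc : ∀ (A B : Matrix (Fin N → Fin d × Fin d) (Fin N → Fin d × Fin d) ℂ) ρ,
      acc ((1 / 2 : ℂ) • (A + B)) ρ = (acc A ρ + acc B ρ) / 2 := by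
    intro A B ρ
    simp [acc, add_mul, Matrix.trace_add]
    ring
  have hmidS : (1 / 2 : ℂ) • (T + V * T * Vᴴ) ∈ S := by
    have hh : (0 : ℂ) ≤ 1 / 2 := by
      rw [Complex.nonneg_iff]; norm_num
    refine ⟨⟨(hT.1.1.add hT'.1.1).smul hh, ?_⟩, ?_, ?_⟩
    · have : (1 : Matrix (Fin N → Fin d × Fin d) (Fin N → Fin d × Fin d) ℂ) -
          (1 / 2 : ℂ) • (T + V * T * Vᴴ) = (1 / 2 : ℂ) • ((1 - T) + (1 - V * T * Vᴴ)) := by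
        module
      rw [this]
      exact (hT.1.2.add hT'.1.2).smul hh
    · intro ρ hρ
      rw [hmidacc]
      linarith [hT.2.1 ρ hρ, hT'.2.1 ρ hρ]
    · intro ρ hρ
      rw [hmidacc]
      linarith [hT.2.2 ρ hρ, hT'.2.2 ρ hρ]
  have hfV : frob (V * T * Vᴴ) = frob T := by
    rw [frob, frob]
    simp only [Matrix.conjTranspose_mul, Matrix.conjTranspose_conjTranspose]
    have : V * (Tᴴ * Vᴴ) * (V * T * Vᴴ) = V * (Tᴴ * T * Vᴴ) := by
      calc V * (Tᴴ * Vᴴ) * (V * T * Vᴴ) = V * Tᴴ * (Vᴴ * V) * T * Vᴴ := by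
            simp only [mul_assoc]
        _ = _ := by rw [hVV']; simp only [mul_assoc, mul_one]
    rw [this, Matrix.trace_mul_comm, mul_assoc, mul_assoc, hVV', mul_one]
  have hle : frob T ≤ frob ((1 / 2 : ℂ) • (T + V * T * Vᴴ)) := hmin hmidS
  have h0 : frob (T - V * T * Vᴴ) ≤ 0 := by
    rw [frob_mid, hfV]; linarith
  have h1 := sub_eq_zero.mp (frob_eq_zero h0)
  calc V * T = V * T * (Vᴴ * V) := by rw [hVV', mul_one]
    _ = (V * T * Vᴴ) * V := by simp only [mul_assoc]
    _ = T * V := by rw [← h1]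

end Twirl

section Algebra

variable {d : ℕ}

/-- The algebra generated by tensor powers of unitaries. -/
noncomputable def symA (d N : ℕ) :
    Subalgebra ℂ (Matrix (Fin N → Fin d) (Fin N → Fin d) ℂ) :=
  Algebra.adjoin ℂ ((fun U => tpow U N) '' (Matrix.unitaryGroup (Fin d) ℂ : Set _))

theorem symA_unitary {N : ℕ} {U : Matrix (Fin d) (Fin d) ℂ}
    (hU : U ∈ Matrix.unitaryGroup (Fin d) ℂ) : tpow U N ∈ symA d N :=
  Algebra.subset_adjoin ⟨U, hU, rfl⟩

theorem dual_expand {κ : Type*} [Fintype κ] [DecidableEq κ]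
    (f : Matrix κ κ ℂ →ₗ[ℂ] ℂ) (A : Matrix κ κ ℂ) :
    f A = ∑ i, ∑ j, A i j * f (Matrix.single i j 1) := by
  conv_lhs => rw [Matrix.matrix_eq_sum_single A]
  simp only [map_sum]
  refine Finset.sum_congr rfl fun i _ => Finset.sum_congr rfl fun j _ => ?_
  rw [← smul_eq_mul, ← map_smul, Matrix.smul_single, smul_eq_mul, mul_one]

theorem symA_diagonal {N : ℕ} (z : Fin d → ℂ) : tpow (Matrix.diagonal z) N ∈ symA d N := by
  by_contra hz
  rw [← Subalgebra.mem_toSubmodule] at hz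
  obtain ⟨f, hf, hker⟩ := Submodule.exists_le_ker_of_notMem hz
  let P : MvPolynomial (Fin d) ℂ := ∑ x : Fin N → Fin d,
    (∏ i, MvPolynomial.X (x i)) * MvPolynomial.C (f (Matrix.single x x 1))
  have hP : ∀ w : Fin d → ℂ, f (tpow (Matrix.diagonal w) N) = MvPolynomial.eval w P := by
    intro w
    rw [tpow_diagonal, dual_expand]
    simp only [P, map_sum, map_mul, map_prod, MvPolynomial.eval_X, MvPolynomial.eval_C]
    refine Finset.sum_congr rfl fun x _ => ?_
    rw [Finset.sum_eq_single x]
    · rw [Matrix.diagonal_apply_eq]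
    · intro y _ hy
      rw [Matrix.diagonal_apply_ne _ hy.symm, zero_mul]
    · simp
  have hinf : (Metric.sphere (0 : ℂ) 1).Infinite := by
    refine Set.infinite_of_injOn_mapsTo (s := Set.Ioc (-Real.pi) Real.pi)
      (f := fun t => (Circle.exp t : ℂ)) ?_ ?_ (Set.Ioc_infinite (by linarith [Real.pi_pos]))
    · intro a ha b hb hab
      have h1 := Circle.arg_exp ha.1 ha.2
      have h2 := Circle.arg_exp hb.1 hb.2
      simp only at hab
      rw [← h1, ← h2, hab]
    · intro a _
      simp
  have hP0 : P = 0 := by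
    refine MvPolynomial.funext_set (fun _ => Metric.sphere (0 : ℂ) 1) (fun _ => hinf) ?_
    intro w hw
    rw [map_zero, ← hP]
    refine LinearMap.mem_ker.mp (hker ((Subalgebra.mem_toSubmodule _).mpr (symA_unitary ?_)))
    rw [Matrix.mem_unitaryGroup_iff, Matrix.star_eq_conjTranspose, Matrix.diagonal_conjTranspose,
      Matrix.diagonal_mul_diagonal, ← Matrix.diagonal_one]
    congr 1
    funext i
    have := hw i (Set.mem_univ i)
    rw [mem_sphere_zero_iff_norm] at this
    simp [Complex.mul_conj, Complex.normSq_eq_norm_sq, this]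
  exact hf (by rw [hP, hP0, map_zero])

theorem symA_herm {N : ℕ} {H : Matrix (Fin d) (Fin d) ℂ} (hH : H.IsHermitian) :
    tpow H N ∈ symA d N := by
  rw [hH.spectral_theorem, Unitary.conjStarAlgAut_apply, tpow_mul, tpow_mul]
  refine mul_mem (mul_mem (symA_unitary (SetLike.coe_mem _)) (symA_diagonal _)) (symA_unitary ?_)
  exact SetLike.coe_mem (star hH.eigenvectorUnitary)

theorem symA_all {N : ℕ} (X : Matrix (Fin d) (Fin d) ℂ) : tpow X N ∈ symA d N := by
  by_contra hz
  rw [← Subalgebra.mem_toSubmodule] at hz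
  obtain ⟨f, hf, hker⟩ := Submodule.exists_le_ker_of_notMem hz
  obtain ⟨H, K, hH, hK, rfl⟩ : ∃ H K : Matrix (Fin d) (Fin d) ℂ,
      H.IsHermitian ∧ K.IsHermitian ∧ X = H + Complex.I • K :=
    ⟨(realPart X : Matrix (Fin d) (Fin d) ℂ), (imaginaryPart X : Matrix (Fin d) (Fin d) ℂ),
      (realPart X).2, (imaginaryPart X).2, (realPart_add_I_smul_imaginaryPart X).symm⟩
  let P : Polynomial ℂ := ∑ x : Fin N → Fin d, ∑ y : Fin N → Fin d,
    (∏ i, (Polynomial.C (H (x i) (y i)) + Polynomial.X * Polynomial.C (K (x i) (y i)))) *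
      Polynomial.C (f (Matrix.single x y 1))
  have hP : ∀ t : ℂ, f (tpow (H + t • K) N) = Polynomial.eval t P := by
    intro t
    rw [dual_expand]
    simp [P, Polynomial.eval_finsetSum, Polynomial.eval_prod, tpow, mul_comm t]
  have hP0 : P = 0 := by
    refine Polynomial.eq_zero_of_infinite_isRoot P ?_
    refine Set.Infinite.mono ?_ (Set.infinite_range_of_injective Complex.ofReal_injective)
    rintro _ ⟨t, rfl⟩
    change Polynomial.eval (t : ℂ) P = 0
    rw [← hP]
    refine LinearMap.mem_ker.mp (hker ((Subalgebra.mem_toSubmodule _).mpr (symA_herm ?_)))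
    refine hH.add ?_
    rw [Matrix.IsHermitian, Matrix.conjTranspose_smul, hK.eq]
    simp
  exact hf (by rw [hP, hP0, Polynomial.eval_zero])

theorem symA_star {N : ℕ} {Z : Matrix (Fin N → Fin d) (Fin N → Fin d) ℂ} (hZ : Z ∈ symA d N) :
    Zᴴ ∈ symA d N := by
  induction hZ using Algebra.adjoin_induction with
  | mem x hx =>
    obtain ⟨U, hU, rfl⟩ := hx
    change (tpow U N)ᴴ ∈ _
    rw [tpow_conjTranspose]
    exact symA_all _
  | algebraMap r =>
    rw [Algebra.algebraMap_eq_smul_one, Matrix.conjTranspose_smul, Matrix.conjTranspose_one]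
    exact (symA d N).smul_mem (one_mem _) _
  | add x y _ _ hx hy => rw [Matrix.conjTranspose_add]; exact add_mem hx hy
  | mul x y _ _ hx hy => rw [Matrix.conjTranspose_mul]; exact mul_mem hy hx

theorem psd_of_symA {κ : Type*} [Fintype κ] [DecidableEq κ] (A : Subalgebra ℂ (Matrix κ κ ℂ))
    {M : Matrix κ κ ℂ} (hMA : M ∈ A) (hM : M.IsHermitian)
    (h : ∀ Y ∈ A, 0 ≤ (M * (Y * Yᴴ)).trace) : M.PosSemidef := by
  rw [hM.posSemidef_iff_eigenvalues_nonneg]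
  intro j
  by_contra hj
  rw [Pi.zero_apply, not_le] at hj
  let S : Finset ℝ := (Finset.univ.image hM.eigenvalues).erase (hM.eigenvalues j)
  let p : Polynomial ℂ := ∏ μ ∈ S, (Polynomial.X - Polynomial.C (μ : ℂ))
  have hp0 : ∀ i, hM.eigenvalues i ≠ hM.eigenvalues j → p.eval (hM.eigenvalues i : ℂ) = 0 := by
    intro i hi
    rw [Polynomial.eval_prod]
    refine Finset.prod_eq_zero (i := hM.eigenvalues i) ?_ (by simp)
    exact Finset.mem_erase.mpr ⟨hi, Finset.mem_image_of_mem _ (Finset.mem_univ i)⟩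
  have hpj : p.eval (hM.eigenvalues j : ℂ) ≠ 0 := by
    rw [Polynomial.eval_prod]
    refine Finset.prod_ne_zero_iff.mpr fun μ hμ => ?_
    have := (Finset.mem_erase.mp hμ).1
    simp only [Polynomial.eval_sub, Polynomial.eval_X, Polynomial.eval_C]
    rw [sub_ne_zero]
    exact_mod_cast this.symm
  have hY : Polynomial.aeval M p ∈ A := by
    have := Polynomial.aeval_mem_adjoin_singleton ℂ M (p := p)
    exact (Algebra.adjoin_le (by simpa using hMA)) this
  set U := hM.eigenvectorUnitary
  set φ := Unitary.conjStarAlgAut ℂ (Matrix κ κ ℂ) U with hφ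
  set D : Matrix κ κ ℂ := Matrix.diagonal (fun i => (hM.eigenvalues i : ℂ)) with hD
  have hMD : M = φ D := hM.spectral_theorem
  have hdiag : Polynomial.aeval D p =
      Matrix.diagonal (fun i => p.eval (hM.eigenvalues i : ℂ)) := by
    have : D = Matrix.diagonalAlgHom ℂ (fun i => (hM.eigenvalues i : ℂ)) := rfl
    rw [this, Polynomial.aeval_algHom_apply, Matrix.diagonalAlgHom_apply]
    congr 1
    funext i
    have := Polynomial.aeval_algHom_apply (Pi.evalAlgHom ℂ (fun _ : κ => ℂ) i)
      (fun i => (hM.eigenvalues i : ℂ)) p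
    simp only [Pi.evalAlgHom_apply] at this
    rw [← this, Polynomial.coe_aeval_eq_eval]
  have hYD : Polynomial.aeval M p = φ (Matrix.diagonal (fun i => p.eval (hM.eigenvalues i : ℂ))) := by
    rw [← hdiag, hMD]
    exact Polynomial.aeval_algHom_apply (φ.toAlgEquiv : Matrix κ κ ℂ →ₐ[ℂ] Matrix κ κ ℂ) D p
  have htr : ∀ B, (φ B).trace = B.trace := by
    intro B
    rw [hφ, Unitary.conjStarAlgAut_apply, Matrix.trace_mul_comm, ← mul_assoc,
      Unitary.coe_star_mul_self, one_mul]
  have hkey : ∀ B, (M * (φ B * (φ B)ᴴ)).trace = (D * (B * Bᴴ)).trace := by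
    intro B
    rw [← Matrix.star_eq_conjTranspose, ← map_star, hMD, ← map_mul, ← map_mul, htr]
    rfl
  have h1 := h _ hY
  rw [hYD, hkey, Matrix.diagonal_conjTranspose, Matrix.diagonal_mul_diagonal, hD,
    Matrix.diagonal_mul_diagonal, Matrix.trace_diagonal] at h1
  have h2 : ∑ i, hM.eigenvalues i * Complex.normSq (p.eval (hM.eigenvalues i : ℂ)) < 0 := by
    refine Finset.sum_neg' (fun i _ => ?_) ⟨j, Finset.mem_univ j, ?_⟩
    · by_cases hi : hM.eigenvalues i = hM.eigenvalues j
      · rw [hi]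
        exact mul_nonpos_of_nonpos_of_nonneg hj.le (Complex.normSq_nonneg _)
      · rw [hp0 i hi]; simp
    · exact mul_neg_of_neg_of_pos hj (Complex.normSq_pos.mpr hpj)
  have h3 : ∑ i, (hM.eigenvalues i : ℂ) * (p.eval (hM.eigenvalues i : ℂ) *
      star (fun i => p.eval (hM.eigenvalues i : ℂ)) i) =
      ((∑ i, hM.eigenvalues i * Complex.normSq (p.eval (hM.eigenvalues i : ℂ)) : ℝ) : ℂ) := by
    push_cast
    refine Finset.sum_congr rfl fun i _ => ?_
    rw [← Complex.mul_conj]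
    rfl
  rw [h3] at h1
  have h4 := (Complex.nonneg_iff.mp h1).1
  rw [Complex.ofReal_re] at h4
  linarith

end Algebra

section Local

variable {d N : ℕ}

/-- An operator acting on Bob's registers only. -/
noncomputable def localB (W : Matrix (Fin N → Fin d) (Fin N → Fin d) ℂ) :
    Matrix (Fin N → Fin d × Fin d) (Fin N → Fin d × Fin d) ℂ :=
  ((1 : Matrix (Fin N → Fin d) (Fin N → Fin d) ℂ) ⊗ₖ W).submatrix (sepE d N) (sepE d N)

theorem localB_tpow (U : Matrix (Fin d) (Fin d) ℂ) :
    tpow ((1 : Matrix (Fin d) (Fin d) ℂ) ⊗ₖ U) N = localB (tpow U N) := by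
  ext x y
  have h := congrFun (congrFun (tpow_one_mat (ι := Fin d) N) (fun i => (x i).1)) (fun i => (y i).1)
  simp only [tpow, Matrix.of_apply] at h
  change (∏ i, (1 : Matrix (Fin d) (Fin d) ℂ) (x i).1 (y i).1 * U (x i).2 (y i).2) =
    (1 : Matrix (Fin N → Fin d) (Fin N → Fin d) ℂ) (fun i => (x i).1) (fun i => (y i).1) *
      ∏ i, U (x i).2 (y i).2
  rw [Finset.prod_mul_distrib]
  exact congrArg (fun t => t * ∏ i, U (x i).2 (y i).2) h

theorem localB_mul (W V : Matrix (Fin N → Fin d) (Fin N → Fin d) ℂ) :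
    localB (W * V) = localB W * localB V := by
  rw [localB, localB, localB, Matrix.submatrix_mul_equiv, ← Matrix.mul_kronecker_mul, one_mul]

theorem localB_add (W V : Matrix (Fin N → Fin d) (Fin N → Fin d) ℂ) :
    localB (W + V) = localB W + localB V := by
  rw [localB, Matrix.kronecker_add]; rfl

theorem localB_smul_one (r : ℂ) :
    localB (r • (1 : Matrix (Fin N → Fin d) (Fin N → Fin d) ℂ)) = r • 1 := by
  rw [localB, Matrix.kronecker_smul, Matrix.one_kronecker_one, Matrix.submatrix_smul]
  simp [Matrix.submatrix_one_equiv]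

theorem localB_conjTranspose (W : Matrix (Fin N → Fin d) (Fin N → Fin d) ℂ) :
    (localB W)ᴴ = localB Wᴴ := by
  rw [localB, Matrix.conjTranspose_submatrix, Matrix.conjTranspose_kronecker,
    Matrix.conjTranspose_one, localB]

/-- The vector on the bipartite system attached to a matrix. -/
def vecOf (Y : Matrix (Fin N → Fin d) (Fin N → Fin d) ℂ) : (Fin N → Fin d × Fin d) → ℂ :=
  fun x => Y (fun i => (x i).1) (fun i => (x i).2)

theorem sum_sep (f : (Fin N → Fin d) → (Fin N → Fin d) → ℂ) :
    ∑ x : Fin N → Fin d × Fin d, f (fun i => (x i).1) (fun i => (x i).2) =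
      ∑ a, ∑ b, f a b := by
  rw [← Fintype.sum_prod_type']
  exact (sepE d N).sum_comp (fun p => f p.1 p.2)

theorem localB_vec (W Y : Matrix (Fin N → Fin d) (Fin N → Fin d) ℂ) :
    localB W *ᵥ vecOf Y = vecOf (Y * Wᵀ) := by
  funext x
  simp only [Matrix.mulVec, dotProduct, vecOf, Matrix.mul_apply, Matrix.transpose_apply]
  have := sum_sep (fun a b => (1 : Matrix (Fin N → Fin d) (Fin N → Fin d) ℂ)
    (fun i => (x i).1) a * W (fun i => (x i).2) b * Y a b)
  refine Eq.trans this ?_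
  rw [Finset.sum_eq_single (fun i => (x i).1)]
  · simp only [Matrix.one_apply_eq, one_mul, mul_comm]
  · intro a _ ha
    simp [Matrix.one_apply_ne ha.symm]
  · simp

theorem localA_vec (W Y : Matrix (Fin N → Fin d) (Fin N → Fin d) ℂ) :
    localA W *ᵥ vecOf Y = vecOf (W * Y) := by
  funext x
  rw [localA_eq]
  simp only [Matrix.mulVec, dotProduct, vecOf, Matrix.mul_apply]
  have := sum_sep (fun a b => W (fun i => (x i).1) a *
    (1 : Matrix (Fin N → Fin d) (Fin N → Fin d) ℂ) (fun i => (x i).2) b * Y a b)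
  refine Eq.trans this ?_
  refine Finset.sum_congr rfl fun a _ => ?_
  rw [Finset.sum_eq_single (fun i => (x i).2)]
  · simp
  · intro b _ hb
    simp [Matrix.one_apply_ne hb.symm]
  · simp

theorem dot_vec (Y Z : Matrix (Fin N → Fin d) (Fin N → Fin d) ℂ) :
    star (vecOf Y) ⬝ᵥ vecOf Z = (Z * Yᴴ).trace := by
  simp only [dotProduct, vecOf, Pi.star_apply, Matrix.trace, Matrix.diag, Matrix.mul_apply,
    Matrix.conjTranspose_apply]
  rw [sum_sep (fun a b => star (Y a b) * Z a b)]
  simp only [mul_comm]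

/-- The sesquilinear form of an operator on vectorized matrices. -/
noncomputable def hform (T : Matrix (Fin N → Fin d × Fin d) (Fin N → Fin d × Fin d) ℂ)
    (Y Z : Matrix (Fin N → Fin d) (Fin N → Fin d) ℂ) : ℂ :=
  star (vecOf Z) ⬝ᵥ (T *ᵥ vecOf Y)

theorem hform_star {T : Matrix (Fin N → Fin d × Fin d) (Fin N → Fin d × Fin d) ℂ}
    (hT : T.IsHermitian) (Y Z : Matrix (Fin N → Fin d) (Fin N → Fin d) ℂ) :
    star (hform T Y Z) = hform T Z Y := by
  rw [hform, hform, ← Matrix.star_dotProduct, Matrix.star_mulVec, hT.eq,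
    Matrix.dotProduct_mulVec]

theorem hform_move {T : Matrix (Fin N → Fin d × Fin d) (Fin N → Fin d × Fin d) ℂ}
    {Y : Matrix (Fin N → Fin d) (Fin N → Fin d) ℂ}
    (hc : localB Yᵀ * T = T * localB Yᵀ) (Z : Matrix (Fin N → Fin d) (Fin N → Fin d) ℂ) :
    hform T Y Z = hform T 1 (Z * Yᴴ) := by
  have h1 : vecOf Y = localB Yᵀ *ᵥ vecOf 1 := by
    rw [localB_vec, Matrix.transpose_transpose, one_mul]
  have h2 : vecOf (Z * Yᴴ) = localB (Yᵀ)ᴴ *ᵥ vecOf Z := by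
    rw [localB_vec]; rfl
  rw [hform, hform, h1, h2, Matrix.mulVec_mulVec, ← hc, ← Matrix.mulVec_mulVec,
    Matrix.dotProduct_mulVec, Matrix.star_mulVec, localB_conjTranspose,
    Matrix.conjTranspose_conjTranspose]

theorem symA_comm {T : Matrix (Fin N → Fin d × Fin d) (Fin N → Fin d × Fin d) ℂ}
    (hT : ∀ U ∈ Matrix.unitaryGroup (Fin d) ℂ,
        tpow ((1 : Matrix (Fin d) (Fin d) ℂ) ⊗ₖ U) N * T =
          T * tpow ((1 : Matrix (Fin d) (Fin d) ℂ) ⊗ₖ U) N)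
    {Z : Matrix (Fin N → Fin d) (Fin N → Fin d) ℂ} (hZ : Z ∈ symA d N) :
    localB Zᵀ * T = T * localB Zᵀ := by
  induction hZ using Algebra.adjoin_induction with
  | mem x hx =>
    obtain ⟨U, hU, rfl⟩ := hx
    change localB (tpow U N)ᵀ * T = T * localB (tpow U N)ᵀ
    rw [tpow_transpose, ← localB_tpow]
    refine hT _ ?_
    rw [Matrix.mem_unitaryGroup_iff, Matrix.star_eq_conjTranspose]
    have h := Matrix.mem_unitaryGroup_iff'.mp hU
    rw [Matrix.star_eq_conjTranspose] at h
    have h2 := congrArg Matrix.transpose h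
    rw [Matrix.transpose_mul, Matrix.transpose_one] at h2
    exact h2
  | algebraMap r =>
    rw [Algebra.algebraMap_eq_smul_one, Matrix.transpose_smul, Matrix.transpose_one,
      localB_smul_one]
    simp
  | add x y _ _ hx hy =>
    rw [Matrix.transpose_add, localB_add, add_mul, mul_add, hx, hy]
  | mul x y _ _ hx hy =>
    rw [Matrix.transpose_mul, localB_mul, mul_assoc, hx, ← mul_assoc, hy, mul_assoc]

/-- Every functional on `symA` is represented by an element of `symA` through the trace. -/
theorem symA_riesz (g : Matrix (Fin N → Fin d) (Fin N → Fin d) ℂ →ₗ[ℂ] ℂ) :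
    ∃ M ∈ symA d N, ∀ Z ∈ symA d N, (M * Z).trace = g Z := by
  let Φ : symA d N →ₗ[ℂ] Module.Dual ℂ (symA d N) := LinearMap.mk₂ ℂ
    (fun M Z => ((M : Matrix (Fin N → Fin d) (Fin N → Fin d) ℂ) * Z).trace)
    (by intro a b c; simp [add_mul]) (by intro a b c; simp)
    (by intro a b c; simp [mul_add]) (by intro a b c; simp)
  have hinj : Function.Injective Φ := by
    rw [injective_iff_map_eq_zero]
    intro M hM
    have h := LinearMap.congr_fun hM ⟨_, symA_star M.2⟩
    have h' : ((M : Matrix (Fin N → Fin d) (Fin N → Fin d) ℂ) * (M.1)ᴴ).trace = 0 := h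
    rw [Matrix.trace_mul_conjTranspose_self_eq_zero_iff] at h'
    exact Subtype.ext h'
  have hsurj : Function.Surjective Φ :=
    (LinearMap.injective_iff_surjective_of_finrank_eq_finrank
      (Subspace.dual_finrank_eq).symm).mp hinj
  obtain ⟨M, hM⟩ := hsurj (g.comp (symA d N).val.toLinearMap)
  exact ⟨M, M.2, fun Z hZ => LinearMap.congr_fun hM ⟨Z, hZ⟩⟩

theorem rep_psd {T : Matrix (Fin N → Fin d × Fin d) (Fin N → Fin d × Fin d) ℂ}
    (hT : ∀ U ∈ Matrix.unitaryGroup (Fin d) ℂ,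
        tpow ((1 : Matrix (Fin d) (Fin d) ℂ) ⊗ₖ U) N * T =
          T * tpow ((1 : Matrix (Fin d) (Fin d) ℂ) ⊗ₖ U) N)
    (hp : T.PosSemidef) {M : Matrix (Fin N → Fin d) (Fin N → Fin d) ℂ} (hM : M ∈ symA d N)
    (h : ∀ Z ∈ symA d N, (M * Z).trace = hform T Z 1) :
    M.PosSemidef ∧ ∀ Y ∈ symA d N, (M * (Y * Yᴴ)).trace = hform T Y Y := by
  have hrep : ∀ Y ∈ symA d N, (M * (Y * Yᴴ)).trace = hform T Y Y := by
    intro Y hY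
    have hYY : Y * Yᴴ ∈ symA d N := mul_mem hY (symA_star hY)
    rw [h _ hYY, hform_move (symA_comm hT hYY), hform_move (symA_comm hT hY)]
    simp [Matrix.conjTranspose_mul]
  refine ⟨psd_of_symA (symA d N) hM ?_ ?_, hrep⟩
  · have h1 : ∀ Z ∈ symA d N, ((M - Mᴴ) * Z).trace = 0 := by
      intro Z hZ
      have h2 : (Mᴴ * Z).trace = star ((M * Zᴴ).trace) := by
        rw [← Matrix.trace_conjTranspose, Matrix.conjTranspose_mul,
          Matrix.conjTranspose_conjTranspose, Matrix.trace_mul_comm]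
      rw [sub_mul, Matrix.trace_sub, h2, h _ hZ, h _ (symA_star hZ), hform_star hp.1,
        hform_move (symA_comm hT hZ), one_mul, sub_self]
    have h3 := h1 _ (symA_star (sub_mem hM (symA_star hM)))
    rw [Matrix.trace_mul_conjTranspose_self_eq_zero_iff] at h3
    exact (sub_eq_zero.mp h3).symm
  · intro Y hY
    rw [hrep Y hY]
    exact hp.dotProduct_mulVec_nonneg _

theorem acc_outer (T : Matrix (Fin N → Fin d × Fin d) (Fin N → Fin d × Fin d) ℂ)
    (ψ : Fin d × Fin d → ℂ) :
    (T * tpow (outer ψ) N).trace = hform T (tpow (Matrix.of fun a b => ψ (a, b)) N)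
      (tpow (Matrix.of fun a b => ψ (a, b)) N) := by
  simp only [hform, Matrix.trace, Matrix.diag, Matrix.mul_apply, dotProduct, Matrix.mulVec,
    Finset.mul_sum]
  refine Finset.sum_congr rfl fun x _ => Finset.sum_congr rfl fun y _ => ?_
  simp only [tpow, outer, vecOf, Matrix.of_apply, Finset.prod_mul_distrib, Pi.star_apply]
  simp
  ring

/-- The local tester with the same acceptance probabilities on pure states. -/
theorem local_tester {T : Matrix (Fin N → Fin d × Fin d) (Fin N → Fin d × Fin d) ℂ}
    (hT : ∀ U ∈ Matrix.unitaryGroup (Fin d) ℂ,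
        tpow ((1 : Matrix (Fin d) (Fin d) ℂ) ⊗ₖ U) N * T =
          T * tpow ((1 : Matrix (Fin d) (Fin d) ℂ) ⊗ₖ U) N)
    (ht : IsTester T) :
    ∃ M : Matrix (Fin N → Fin d) (Fin N → Fin d) ℂ, IsTester M ∧
      ∀ ψ : Fin d × Fin d → ℂ, acc (localA M) (outer ψ) = acc T (outer ψ) := by
  let g : Matrix (Fin N → Fin d) (Fin N → Fin d) ℂ →ₗ[ℂ] ℂ :=
    { toFun := fun Z => hform T Z 1
      map_add' := by
        intro a b
        have : vecOf (a + b) = vecOf a + vecOf b := rfl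
        simp only [hform, this, Matrix.mulVec_add, dotProduct_add]
      map_smul' := by
        intro r a
        have : vecOf (r • a) = r • vecOf a := rfl
        simp only [hform, this, Matrix.mulVec_smul, dotProduct_smul]
        rfl }
  obtain ⟨M, hM, hg⟩ := symA_riesz g
  obtain ⟨hpsd, hrep⟩ := rep_psd hT ht.1 hM hg
  refine ⟨M, ⟨hpsd, ?_⟩, ?_⟩
  · refine (rep_psd (T := 1 - T) (M := 1 - M) ?_ ht.2 (sub_mem (one_mem _) hM) ?_).1
    · intro U hU
      rw [mul_sub, sub_mul, hT U hU, mul_one, one_mul]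
    · intro Z hZ
      rw [sub_mul, Matrix.trace_sub, hg Z hZ, one_mul]
      change _ - hform T Z 1 = _
      rw [hform, hform, Matrix.sub_mulVec, dotProduct_sub, Matrix.one_mulVec, dot_vec,
        Matrix.conjTranspose_one, mul_one]
  · intro ψ
    rw [acc, acc, acc_outer, acc_outer, ← hrep _ (symA_all _), hform, localA_vec, dot_vec,
      mul_assoc]

end Local

section Final

theorem density_spectral {ι : Type*} [Fintype ι] [DecidableEq ι] {ρ : Matrix ι ι ℂ}
    (hρ : IsDensity ρ) :
    ∃ (l : ℝ) (φ : ι → ℂ), 0 ≤ l ∧ l ≤ 1 ∧ IsUnitVec φ ∧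
      (ρ - (l : ℂ) • outer φ).PosSemidef ∧ ((ρ * ρ).trace).re ≤ l := by
  have hne : Nonempty ι := by
    by_contra h
    rw [not_nonempty_iff] at h
    have := hρ.2
    simp [Matrix.trace] at this
  have hH := hρ.1.1
  obtain ⟨i0, hi0⟩ := Finite.exists_max hH.eigenvalues
  set e := hH.eigenvalues with he
  have hpos : ∀ i, 0 ≤ e i := fun i => hρ.1.eigenvalues_nonneg i
  have hU := Matrix.mem_unitaryGroup_iff'.mp hH.eigenvectorUnitary.2
  have hspec := hH.spectral_theorem
  rw [Unitary.conjStarAlgAut_apply] at hspec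
  set U : Matrix ι ι ℂ := (hH.eigenvectorUnitary : Matrix ι ι ℂ) with hUdef
  rw [Matrix.star_eq_conjTranspose] at hU hspec
  set D : Matrix ι ι ℂ := Matrix.diagonal (RCLike.ofReal ∘ hH.eigenvalues) with hD
  have htr : ∑ i, e i = 1 := by
    have h := hρ.2
    rw [hspec, Matrix.trace_mul_comm, ← mul_assoc, hU, one_mul, hD, Matrix.trace_diagonal] at h
    have h2 := congrArg Complex.re h
    simpa using h2
  refine ⟨e i0, fun x => U x i0, hpos i0, ?_, ?_, ?_, ?_⟩
  · rw [← htr]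
    exact Finset.single_le_sum (fun i _ => hpos i) (Finset.mem_univ i0)
  · have h := congrFun (congrFun hU i0) i0
    rw [Matrix.one_apply_eq, Matrix.mul_apply] at h
    have h2 := congrArg Complex.re h
    rw [IsUnitVec]
    simpa [Complex.normSq_apply] using h2
  · have : ρ - ((e i0 : ℝ) : ℂ) • outer (fun x => U x i0) =
        U * Matrix.diagonal (fun i => if i = i0 then (0 : ℂ) else ((e i : ℝ) : ℂ)) * Uᴴ := by
      rw [sub_eq_iff_eq_add]
      conv_lhs => rw [hspec]
      ext x y
      rw [hD, Matrix.add_apply, Matrix.smul_apply, Matrix.mul_apply, Matrix.mul_apply]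
      simp only [Matrix.mul_diagonal, outer, Matrix.of_apply, Matrix.conjTranspose_apply]
      rw [← Finset.add_sum_erase _ _ (Finset.mem_univ i0),
        ← Finset.add_sum_erase (a := i0) Finset.univ
          (fun j => U x j * (if j = i0 then (0 : ℂ) else ((e j : ℝ) : ℂ)) * star (U y j))
          (Finset.mem_univ i0)]
      have h3 : ∀ j ∈ Finset.univ.erase i0,
          U x j * (if j = i0 then (0 : ℂ) else ((e j : ℝ) : ℂ)) * star (U y j) =
            U x j * (RCLike.ofReal ∘ hH.eigenvalues) j * star (U y j) := by
        intro j hj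
        rw [if_neg (Finset.ne_of_mem_erase hj)]
        rfl
      rw [Finset.sum_congr rfl h3]
      simp [he]
      ring
    rw [this]
    refine Matrix.PosSemidef.mul_mul_conjTranspose_same ?_ U
    refine Matrix.PosSemidef.diagonal fun i => ?_
    by_cases h : i = i0
    · simp [h]
    · simpa [h] using hpos i
  · have h1 : (ρ * ρ).trace = ∑ i, ((e i : ℝ) : ℂ) * ((e i : ℝ) : ℂ) := by
      have : ρ * ρ = U * (D * D) * Uᴴ := by
        calc ρ * ρ = (U * D * Uᴴ) * (U * D * Uᴴ) := by rw [← hspec]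
          _ = U * D * (Uᴴ * U) * D * Uᴴ := by simp only [mul_assoc]
          _ = _ := by rw [hU]; simp only [mul_assoc, one_mul]
      rw [this, Matrix.trace_mul_comm, ← mul_assoc, hU, one_mul, hD, Matrix.diagonal_mul_diagonal,
        Matrix.trace_diagonal]
      rfl
    rw [h1]
    have : (∑ i, ((e i : ℝ) : ℂ) * ((e i : ℝ) : ℂ)).re = ∑ i, e i * e i := by
      simp
    rw [this]
    calc ∑ i, e i * e i ≤ ∑ i, e i0 * e i :=
          Finset.sum_le_sum fun i _ => mul_le_mul_of_nonneg_right (hi0 i) (hpos i)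
      _ = e i0 := by rw [← Finset.mul_sum, htr, mul_one]

theorem outer_psd {ι : Type*} [Fintype ι] [DecidableEq ι] (ψ : ι → ℂ) : (outer ψ).PosSemidef := by
  have : outer ψ = Matrix.vecMulVec ψ (star ψ) := rfl
  rw [this]
  exact Matrix.posSemidef_vecMulVec_self_star ψ

theorem outer_trace {ι : Type*} [Fintype ι] [DecidableEq ι] {ψ : ι → ℂ} (h : IsUnitVec ψ) :
    (outer ψ).trace = 1 := by
  simp only [Matrix.trace, Matrix.diag, outer, Matrix.of_apply, Complex.mul_conj]
  rw [← Complex.ofReal_sum, h, Complex.ofReal_one]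

theorem outer_purity {ι : Type*} [Fintype ι] [DecidableEq ι] {ψ : ι → ℂ} (h : IsUnitVec ψ) :
    (outer ψ * outer ψ).trace = 1 := by
  have h1 := outer_trace h
  have : (outer ψ * outer ψ).trace = (outer ψ).trace * (outer ψ).trace := by
    simp only [Matrix.trace, Matrix.diag, outer, Matrix.of_apply, Matrix.mul_apply]
    rw [Finset.sum_mul_sum]
    refine Finset.sum_congr rfl fun i _ => Finset.sum_congr rfl fun j _ => by ring
  rw [this, h1, one_mul]

/-- Replacing a nearly pure state by its dominant pure component. -/
theorem acc_near_pure {ι : Type*} [Fintype ι] [DecidableEq ι] {N : ℕ} {ρ : Matrix ι ι ℂ}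
    (hρ : IsDensity ρ) {l : ℝ} (hl : 0 ≤ l) {φ : ι → ℂ} (hφ : IsUnitVec φ)
    (hsub : (ρ - (l : ℂ) • outer φ).PosSemidef)
    {T : Matrix (Fin N → ι) (Fin N → ι) ℂ} (hT : IsTester T) :
    l ^ N * acc T (outer φ) ≤ acc T ρ ∧ acc T ρ ≤ l ^ N * acc T (outer φ) + (1 - l ^ N) := by
  have hA : ((l : ℂ) • outer φ).PosSemidef :=
    (outer_psd φ).smul (by exact_mod_cast hl)
  have hmono := tpow_mono hA hsub N
  rw [tpow_smul] at hmono
  have key : ∀ S : Matrix (Fin N → ι) (Fin N → ι) ℂ,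
      ((S * (tpow ρ N - (l : ℂ) ^ N • tpow (outer φ) N)).trace).re =
        acc S ρ - l ^ N * acc S (outer φ) := by
    intro S
    rw [mul_sub, Matrix.trace_sub, Matrix.mul_smul, Matrix.trace_smul, Complex.sub_re, acc, acc,
      smul_eq_mul, ← Complex.ofReal_pow, Complex.re_ofReal_mul]
  have hone : acc (1 : Matrix (Fin N → ι) (Fin N → ι) ℂ) ρ = 1 := acc_one hρ
  have hone' : acc (1 : Matrix (Fin N → ι) (Fin N → ι) ℂ) (outer φ) = 1 :=
    acc_one ⟨outer_psd φ, outer_trace hφ⟩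
  have h1 := key T
  have h2 := key (1 - T)
  rw [acc_sub, acc_sub, hone, hone'] at h2
  have p1 := (Complex.nonneg_iff.mp (trace_mul_psd hT.1 hmono)).1
  have p2 := (Complex.nonneg_iff.mp (trace_mul_psd hT.2 hmono)).1
  rw [h1] at p1
  rw [h2] at p2
  constructor <;> nlinarith

theorem exp_neg_le_quad {t : ℝ} (ht : 0 ≤ t) : Real.exp (-t) ≤ 1 - t + t ^ 2 / 2 := by
  have h := Real.quadratic_le_exp_of_nonneg ht
  have h1 : Real.exp (-t) * Real.exp t = 1 := by rw [← Real.exp_add]; simp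
  have hq : 0 ≤ 1 - t + t ^ 2 / 2 := by nlinarith [sq_nonneg (t - 1)]
  have h2 : (1 - t + t ^ 2 / 2) * (1 + t + t ^ 2 / 2) ≤ (1 - t + t ^ 2 / 2) * Real.exp t :=
    mul_le_mul_of_nonneg_left h hq
  have h3 : Real.exp (-t) * Real.exp t ≤ (1 - t + t ^ 2 / 2) * Real.exp t := by
    rw [h1]; nlinarith [sq_nonneg (t ^ 2)]
  exact le_of_mul_le_mul_right h3 (Real.exp_pos t)

theorem log_two_le {s : ℝ} (hs : 0 < s) : 2 ≤ Real.log (1 / s + 10) := by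
  rw [Real.le_log_iff_exp_le (by positivity)]
  have h : Real.exp 2 = Real.exp 1 * Real.exp 1 := by rw [← Real.exp_add]; norm_num
  have h1 := Real.exp_one_lt_d9
  have h2 := Real.exp_pos 1
  have h3 : 0 < 1 / s := by positivity
  nlinarith

theorem exp_neg_log_le {s : ℝ} (hs : 0 < s) : Real.exp (-Real.log (1 / s + 10)) ≤ s := by
  have h3 : 0 < 1 / s := by positivity
  rw [Real.exp_neg, Real.exp_log (by positivity)]
  calc (1 / s + 10)⁻¹ ≤ (1 / s)⁻¹ := inv_anti₀ h3 (by linarith)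
    _ = s := by simp

theorem yes_bound {c p : ℝ} (hcp : c ≤ p) (hp0 : 0 ≤ p) (hp1 : p ≤ 1) (k : ℕ)
    (hk : 1 ≤ k) : c ≤ btail k ⌊(k : ℝ) * (1 - c) + √(k : ℝ)⌋₊ p := by
  have hkR : (1 : ℝ) ≤ k := by exact_mod_cast hk
  have hk0 : (0 : ℝ) < k := by linarith
  set r := ⌊(k : ℝ) * (1 - c) + √(k : ℝ)⌋₊ with hr
  have hr1 : (k : ℝ) * (1 - c) + √(k : ℝ) < r + 1 := Nat.lt_floor_add_one _
  have hsq : √(k : ℝ) ^ 2 = k := Real.sq_sqrt hk0.le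
  have hs0 : 0 < √(k : ℝ) := Real.sqrt_pos.mpr hk0
  have hmul : (k : ℝ) * (1 - p) ≤ k * (1 - c) := mul_le_mul_of_nonneg_left (by linarith) hk0.le
  have h := btail_chebyshev p hp0 hp1 k r (k * (1 - p)) (by linarith)
  set b := btail k r p
  by_contra hb
  push Not at hb
  have hge : √(k : ℝ) ≤ r + 1 - k * (1 - p) := by linarith
  have hge2 : (k : ℝ) ≤ (r + 1 - k * (1 - p)) ^ 2 := by
    exact hsq.symm.le.trans (pow_le_pow_left₀ hs0.le hge 2)
  have h1 : (1 - b) * k ≤ (1 - b) * (r + 1 - k * (1 - p)) ^ 2 :=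
    mul_le_mul_of_nonneg_left hge2 (by linarith)
  have h2 : (1 - b) * k ≤ p * (1 - p) * k := by
    have : (k * (1 - p) - k * (1 - p)) ^ 2 = (0 : ℝ) := by ring
    rw [this] at h
    linarith
  have h3 := le_of_mul_le_mul_right h2 hk0
  nlinarith

theorem no_bound {c s p : ℝ} (hs0 : 0 < s) (hsc : s < c) (hc1 : c ≤ 1) (hp0 : 0 ≤ p)
    (hp1 : p ≤ 1) (hp : p ≤ s + (c - s) / 2) (k : ℕ)
    (hk : 32 * Real.log (1 / s + 10) / (c - s) ^ 2 ≤ k) :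
    btail k ⌊(k : ℝ) * (1 - c) + √(k : ℝ)⌋₊ p ≤ s := by
  have hL := log_two_le hs0
  have hexp := exp_neg_log_le hs0
  set L := Real.log (1 / s + 10)
  obtain ⟨δ, hδ⟩ : ∃ δ, δ = c - s := ⟨_, rfl⟩
  rw [← hδ] at hk hp
  have hδ0 : 0 < δ := by linarith
  have hk' : 32 * L ≤ k * δ ^ 2 := by rwa [div_le_iff₀ (by positivity)] at hk
  have hk0 : (0 : ℝ) ≤ k := Nat.cast_nonneg k
  have hs2 : 0 ≤ √(k : ℝ) := Real.sqrt_nonneg _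
  have hsq : √(k : ℝ) ^ 2 = k := Real.sq_sqrt hk0
  have hr : ((⌊(k : ℝ) * (1 - c) + √(k : ℝ)⌋₊ : ℕ) : ℝ) ≤ k * (1 - c) + √(k : ℝ) :=
    Nat.floor_le (add_nonneg (mul_nonneg hk0 (by linarith)) hs2)
  have hch := btail_chernoff p (δ / 4) hp0 hp1 (by linarith) k ⌊(k : ℝ) * (1 - c) + √(k : ℝ)⌋₊
  set r := ⌊(k : ℝ) * (1 - c) + √(k : ℝ)⌋₊
  have hsk : √(k : ℝ) ≤ k * δ / 4 := by
    have h4 : 4 ≤ √(k : ℝ) * δ := by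
      have : (4 : ℝ) ^ 2 ≤ (√(k : ℝ) * δ) ^ 2 := by rw [mul_pow, hsq]; linarith
      exact le_of_sq_le_sq this (by positivity)
    calc √(k : ℝ) = √(k : ℝ) * 4 / 4 := by ring
      _ ≤ √(k : ℝ) * (√(k : ℝ) * δ) / 4 := by gcongr
      _ = √(k : ℝ) ^ 2 * δ / 4 := by ring
      _ = _ := by rw [hsq]
  have hq := exp_neg_le_quad (t := δ / 4) (by linarith)
  have hbase : p + (1 - p) * Real.exp (-(δ / 4)) ≤
      Real.exp (-((1 - p) * (δ / 4 - (δ / 4) ^ 2 / 2))) := by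
    have h1 := Real.add_one_le_exp (-((1 - p) * (δ / 4 - (δ / 4) ^ 2 / 2)))
    have h2 : (1 - p) * Real.exp (-(δ / 4)) ≤ (1 - p) * (1 - δ / 4 + (δ / 4) ^ 2 / 2) :=
      mul_le_mul_of_nonneg_left hq (by linarith)
    linarith
  have hbase0 : 0 ≤ p + (1 - p) * Real.exp (-(δ / 4)) :=
    add_nonneg hp0 (mul_nonneg (by linarith) (Real.exp_pos _).le)
  refine hch.trans ?_
  calc Real.exp (δ / 4 * r) * (p + (1 - p) * Real.exp (-(δ / 4))) ^ k
      ≤ Real.exp (δ / 4 * r) * (Real.exp (-((1 - p) * (δ / 4 - (δ / 4) ^ 2 / 2)))) ^ k := by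
        gcongr
    _ = Real.exp (δ / 4 * r + k * (-((1 - p) * (δ / 4 - (δ / 4) ^ 2 / 2)))) := by
        rw [← Real.exp_nat_mul, ← Real.exp_add]
    _ ≤ Real.exp (-L) := by
        apply Real.exp_le_exp.mpr
        have e1 : (r : ℝ) - k * (1 - p) ≤ -(k * δ / 4) := by
          have : (k : ℝ) * (1 - c) - k * (1 - p) ≤ k * (-(δ / 2)) := by
            rw [← mul_sub]
            exact mul_le_mul_of_nonneg_left (by linarith) hk0
          linarith
        have e2 : δ / 4 * ((r : ℝ) - k * (1 - p)) ≤ δ / 4 * (-(k * δ / 4)) :=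
          mul_le_mul_of_nonneg_left e1 (by linarith)
        have e3 : (k : ℝ) * (1 - p) * ((δ / 4) ^ 2 / 2) ≤ k * 1 * ((δ / 4) ^ 2 / 2) := by
          gcongr; linarith
        nlinarith
    _ ≤ s := hexp

theorem swap_bound {s δ x : ℝ} (hs0 : 0 < s) (hδ0 : 0 < δ) (hx0 : 0 ≤ x) {N : ℕ} (hN : 1 ≤ N)
    (hx : x ≤ 1 - δ / (2 * N)) (m : ℕ) (hm : 4 * N * Real.log (1 / s + 10) / δ ≤ m) :
    ((1 + x) / 2) ^ m ≤ s := by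
  have hexp := exp_neg_log_le hs0
  set L := Real.log (1 / s + 10)
  have hN0 : (0 : ℝ) < N := by exact_mod_cast hN
  rw [div_le_iff₀ hδ0] at hm
  have h1 := Real.add_one_le_exp (-(δ / (4 * N)))
  have h2 : δ / (4 * N) = δ / (2 * N) / 2 := by field_simp; norm_num
  calc ((1 + x) / 2) ^ m ≤ (Real.exp (-(δ / (4 * N)))) ^ m := by
        gcongr; linarith
    _ = Real.exp (m * (-(δ / (4 * N)))) := by rw [← Real.exp_nat_mul]
    _ ≤ Real.exp (-L) := by
        apply Real.exp_le_exp.mpr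
        have : L ≤ m * δ / (4 * N) := by rw [le_div_iff₀ (by positivity)]; linarith
        have e : (m : ℝ) * (-(δ / (4 * N))) = -(m * δ / (4 * N)) := by ring
        rw [e]; linarith
    _ ≤ s := hexp

theorem count_bound {L δ : ℝ} (hL : 2 ≤ L) (hδ0 : 0 < δ) (hδ1 : δ ≤ 1) {N : ℕ} (hN : 1 ≤ N)
    (K : ℕ) :
    2 * ⌈4 * N * L / δ⌉₊ + N * ⌈32 * L / δ ^ 2⌉₊ ≤ ⌈100 * L * (δ⁻¹) ^ 3⌉₊ * max N K := by
  refine le_trans ?_ (Nat.mul_le_mul_left _ (le_max_left N K))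
  have hNR : (1 : ℝ) ≤ N := by exact_mod_cast hN
  have h1 := (Nat.ceil_lt_add_one (show 0 ≤ 4 * N * L / δ by positivity)).le
  have h2 := (Nat.ceil_lt_add_one (show 0 ≤ 32 * L / δ ^ 2 by positivity)).le
  have h3 := Nat.le_ceil (100 * L * (δ⁻¹) ^ 3)
  have hu : 1 ≤ δ⁻¹ := (one_le_inv₀ hδ0).mpr hδ1
  have e1 : 4 * N * L / δ = 4 * N * (L * δ⁻¹) := by field_simp
  have e2 : 32 * L / δ ^ 2 = 32 * (L * δ⁻¹ ^ 2) := by field_simp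
  rw [e1] at h1
  rw [e2] at h2
  rw [e1, e2]
  set u := δ⁻¹
  have hu2 : u ^ 2 ≤ u ^ 3 := pow_le_pow_right₀ hu (by norm_num)
  have hu1 : u ≤ u ^ 3 := by
    have := pow_le_pow_right₀ hu (show 1 ≤ 3 by norm_num)
    simpa using this
  have f1 : L * u ≤ L * u ^ 3 := by gcongr
  have f2 : L * u ^ 2 ≤ L * u ^ 3 := by gcongr
  have f3 : 2 ≤ L * u ^ 3 := by nlinarith
  have g2 : (N : ℝ) * (⌈32 * (L * u ^ 2)⌉₊ : ℝ) ≤ N * (32 * (L * u ^ 2) + 1) := by gcongr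
  have : (2 * (⌈4 * N * (L * u)⌉₊ : ℝ) + N * (⌈32 * (L * u ^ 2)⌉₊ : ℝ)) ≤
      (⌈100 * L * u ^ 3⌉₊ : ℝ) * N := by
    calc _ ≤ 2 * (4 * N * (L * u) + 1) + N * (32 * (L * u ^ 2) + 1) := by linarith
      _ ≤ 2 * (4 * N * (L * u ^ 3) + N) + N * (32 * (L * u ^ 3) + 1) := by gcongr
      _ = (40 * (L * u ^ 3) + 3) * N := by ring
      _ ≤ (100 * L * u ^ 3) * N := by gcongr; linarith
      _ ≤ _ := by gcongr
  exact_mod_cast this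

end Final

/-- Theorem `thm:ext`: for properties of bipartite mixed states that are
unitarily invariant on `H_B` and whose yes-instances are pure, one-way LOCC testers achieve
the optimal sample complexity up to an explicit constant overhead. -/
theorem stmt_1 (d : ℕ) (hd : 1 ≤ d)
    (Pyes Pno : Set (Matrix (Fin d × Fin d) (Fin d × Fin d) ℂ))
    (hdens : ∀ ρ ∈ Pyes ∪ Pno, IsDensity ρ)
    (hdisj : Disjoint Pyes Pno)
    (hinvyes : ∀ U ∈ Matrix.unitaryGroup (Fin d) ℂ, ∀ ρ ∈ Pyes,
      ((1 : Matrix (Fin d) (Fin d) ℂ) ⊗ₖ U) * ρ * ((1 : Matrix (Fin d) (Fin d) ℂ) ⊗ₖ U)ᴴ ∈ Pyes)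
    (hinvno : ∀ U ∈ Matrix.unitaryGroup (Fin d) ℂ, ∀ ρ ∈ Pno,
      ((1 : Matrix (Fin d) (Fin d) ℂ) ⊗ₖ U) * ρ * ((1 : Matrix (Fin d) (Fin d) ℂ) ⊗ₖ U)ᴴ ∈ Pno)
    (hpure : ∀ ρ ∈ Pyes, ∃ ψ : Fin d × Fin d → ℂ, IsUnitVec ψ ∧ ρ = outer ψ)
    (c s : ℝ) (hs0 : 0 < s) (hsc : s < c) (hc1 : c ≤ 1)
    (N : ℕ) (hN : 1 ≤ N)
    (hexists : ∃ T : Matrix (Fin N → Fin d × Fin d) (Fin N → Fin d × Fin d) ℂ,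
      IsTester T ∧ (∀ ρ ∈ Pyes, c ≤ acc T ρ) ∧ (∀ ρ ∈ Pno, acc T ρ ≤ s)) :
    ∃ N' : ℕ,
      N' ≤ ⌈100 * Real.log (1 / s + 10) * ((c - s)⁻¹) ^ 3⌉₊ * max N ⌈2 * (c - s)⁻¹⌉₊ ∧
      ∃ T' : Matrix (Fin N' → Fin d × Fin d) (Fin N' → Fin d × Fin d) ℂ,
        IsTester T' ∧ IsOneWayLOCC T' ∧
        (∀ ρ ∈ Pyes, c ≤ acc T' ρ) ∧ (∀ ρ ∈ Pno, acc T' ρ ≤ s) := by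
  obtain ⟨T, hT, hTyes, hTno, hTU⟩ := twirl Pyes Pno hinvyes hinvno c s hexists
  obtain ⟨M, hM, hMT⟩ := local_tester hTU hT
  have hL := log_two_le hs0
  have hδ0 : 0 < c - s := by linarith
  have hδ1 : c - s ≤ 1 := by linarith
  have hN0 : (0 : ℝ) < N := by exact_mod_cast hN
  set k := ⌈32 * Real.log (1 / s + 10) / (c - s) ^ 2⌉₊ with hk
  set m := ⌈4 * N * Real.log (1 / s + 10) / (c - s)⌉₊ with hm
  have hkle : 32 * Real.log (1 / s + 10) / (c - s) ^ 2 ≤ k := Nat.le_ceil _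
  have hmle : 4 * N * Real.log (1 / s + 10) / (c - s) ≤ m := Nat.le_ceil _
  have hk1 : 1 ≤ k := Nat.ceil_pos.mpr (by positivity)
  obtain ⟨S, hS, hSL, hSacc⟩ := swap_power (d := d) m
  obtain ⟨Q, hQ, hQacc⟩ := amplify hM k ⌊(k : ℝ) * (1 - c) + √(k : ℝ)⌋₊
  have hQt := localA_tester hQ
  have hMt := localA_tester hM
  refine ⟨2 * m + N * k, count_bound hL hδ0 hδ1 hN _, ten S (localA Q), ten_tester hS hQt,
    locc_ten hSL (localA_locc hQ), ?_, ?_⟩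
  · intro ρ hρ
    have hd' := hdens ρ (Or.inl hρ)
    rw [acc_ten hS.1 hQt.1 hd'.1, hSacc ρ hd', hQacc ρ hd']
    obtain ⟨ψ, hψ, hρψ⟩ := hpure ρ hρ
    have hp : ((ρ * ρ).trace).re = 1 := by rw [hρψ, outer_purity hψ, Complex.one_re]
    rw [hp]
    norm_num
    refine yes_bound ?_ (acc_nonneg hMt.1 hd'.1) (acc_le_one hMt hd') k hk1
    rw [hρψ, hMT ψ, ← hρψ]
    exact hTyes ρ hρ
  · intro ρ hρ
    have hd' := hdens ρ (Or.inr hρ)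
    rw [acc_ten hS.1 hQt.1 hd'.1]
    have a0 := acc_nonneg hS.1 hd'.1
    have a1 := acc_le_one hS hd'
    have b0 := acc_nonneg hQt.1 hd'.1
    have b1 := acc_le_one hQt hd'
    obtain ⟨l, φ, hl0, hl1, hφ, hsub, htr⟩ := density_spectral hd'
    by_cases hcase : l ≤ 1 - (c - s) / (2 * N)
    · have : acc S ρ ≤ s := by
        rw [hSacc ρ hd']
        refine swap_bound hs0 hδ0 ?_ hN (htr.trans hcase) m hmle
        exact (Complex.nonneg_iff.mp (trace_mul_psd hd'.1 hd'.1)).1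
      calc acc S ρ * acc (localA Q) ρ ≤ acc S ρ * 1 := by gcongr
        _ ≤ s := by linarith
    · push Not at hcase
      have : acc (localA Q) ρ ≤ s := by
        rw [hQacc ρ hd']
        refine no_bound hs0 hsc hc1 (acc_nonneg hMt.1 hd'.1) (acc_le_one hMt hd') ?_ k hkle
        have h1 := (acc_near_pure hd' hl0 hφ hsub hMt).2
        have h2 := (acc_near_pure hd' hl0 hφ hsub hT).1
        rw [hMT φ] at h1
        have h3 := hTno ρ hρ
        have h4 := one_add_mul_le_pow (show -2 ≤ l - 1 by linarith) N
        have h5 : N * ((c - s) / (2 * N)) = (c - s) / 2 := by field_simp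
        have h6 : N * (1 - l) ≤ N * ((c - s) / (2 * N)) := by gcongr; linarith
        have h7 : 1 + (l - 1) = l := by ring
        rw [h7] at h4
        linarith
      calc acc S ρ * acc (localA Q) ρ ≤ 1 * acc (localA Q) ρ := by gcongr
        _ ≤ s := by linarith

end PaperStmt
end

section
/- Optimal average-case local tester (Theorem theorem-424241): Let d, N ≥ 1 and let T be any matrix indexed by (Fin N → Fin d × Fin d) with 0 ⊑ T ⊑ 1 (Loewner order). Then there exists a matrix M indexed by (Fin N → Fin d) with 0 ⊑ M ⊑ 1 such that for EVERY Borel probability measure D on the unit sphere of (Fin d × Fin d) → ℂ that is unitarily invariant on H_B, one has ∫ tr(T * (ψψ†)^{⊗N}) dD(ψ) = ∫ tr(T̂ * (ψψ†)^{⊗N}) dD(ψ), where T̂ is the local tester T̂ x y = M (fun i => (x i).1) (fun i => (y i).1) * (if (fun i => (x i).2) = (fun i => (y i).2) then 1 else 0). -/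
open scoped ComplexConjugate ComplexOrder Kronecker Matrix
open MeasureTheory

namespace PaperStmt

section aux
variable {d N : ℕ}

lemma tpow_mul_s3 (A B : Matrix (Fin d) (Fin d) ℂ) :
    tpow (A * B) N = tpow A N * tpow B N := by
  ext x y
  simp only [tpow, Matrix.of_apply, Matrix.mul_apply]
  rw [Finset.prod_univ_sum, Fintype.piFinset_univ]
  simp [Finset.prod_mul_distrib]

lemma tpow_conjTranspose_s3 (A : Matrix (Fin d) (Fin d) ℂ) :
    tpow Aᴴ N = (tpow A N)ᴴ := by
  ext x y
  simp [tpow, Matrix.conjTranspose_apply]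

lemma tpow_diagonal_s3 (s : Fin d → ℂ) :
    tpow (Matrix.diagonal s) N = Matrix.diagonal (fun a : Fin N → Fin d => ∏ i, s (a i)) := by
  ext x y
  by_cases h : x = y
  · subst h; simp [tpow]
  · obtain ⟨i, hi⟩ := Function.ne_iff.mp h
    simp only [tpow, Matrix.of_apply, Matrix.diagonal_apply_ne _ h]
    exact Finset.prod_eq_zero (Finset.mem_univ i) (Matrix.diagonal_apply_ne _ hi)

lemma tpow_one : tpow (1 : Matrix (Fin d) (Fin d) ℂ) N = 1 := by
  rw [← Matrix.diagonal_one, tpow_diagonal_s3]; simp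

lemma exists_svd (A : Matrix (Fin d) (Fin d) ℂ) :
    ∃ V ∈ Matrix.unitaryGroup (Fin d) ℂ, ∃ W ∈ Matrix.unitaryGroup (Fin d) ℂ,
      ∃ s : Fin d → ℂ, A = V * Matrix.diagonal s * W := by
  have hA : (A * Aᴴ).IsHermitian := Matrix.isHermitian_mul_conjTranspose_self A
  let V : Matrix.unitaryGroup (Fin d) ℂ := hA.eigenvectorUnitary
  let B : Matrix (Fin d) (Fin d) ℂ := (V : Matrix (Fin d) (Fin d) ℂ)ᴴ * A
  have hVV : (V : Matrix (Fin d) (Fin d) ℂ) * (V : Matrix (Fin d) (Fin d) ℂ)ᴴ = 1 :=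
    Matrix.mem_unitaryGroup_iff.mp V.2
  have hVV' : (V : Matrix (Fin d) (Fin d) ℂ)ᴴ * (V : Matrix (Fin d) (Fin d) ℂ) = 1 :=
    Matrix.mem_unitaryGroup_iff'.mp V.2
  have hB : B * Bᴴ = Matrix.diagonal (RCLike.ofReal ∘ hA.eigenvalues) := by
    have h := hA.spectral_theorem
    rw [Unitary.conjStarAlgAut_apply] at h
    have : B * Bᴴ = (V : Matrix (Fin d) (Fin d) ℂ)ᴴ * (A * Aᴴ) * V := by
      simp [B, Matrix.conjTranspose_mul, Matrix.mul_assoc]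
    have h' : (V : Matrix (Fin d) (Fin d) ℂ)ᴴ * (A * Aᴴ) * (V : Matrix (Fin d) (Fin d) ℂ) = (V : Matrix (Fin d) (Fin d) ℂ)ᴴ *
        ((V : Matrix (Fin d) (Fin d) ℂ) * Matrix.diagonal (RCLike.ofReal ∘ hA.eigenvalues) *
        (V : Matrix (Fin d) (Fin d) ℂ)ᴴ) * (V : Matrix (Fin d) (Fin d) ℂ) :=
      congrArg (fun X => (V : Matrix (Fin d) (Fin d) ℂ)ᴴ * X * (V : Matrix (Fin d) (Fin d) ℂ)) h
    rw [this, h']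
    change (V : Matrix (Fin d) (Fin d) ℂ)ᴴ * ((V : Matrix (Fin d) (Fin d) ℂ) * _ *
      (V : Matrix (Fin d) (Fin d) ℂ)ᴴ) * V = _
    simp only [Matrix.mul_assoc, hVV', Matrix.mul_one]
    rw [← Matrix.mul_assoc, hVV', Matrix.one_mul]
  let f : Fin d → EuclideanSpace ℂ (Fin d) := fun i => WithLp.toLp 2 (fun j => B i j)
  have hf : Pairwise fun i j => inner ℂ (f i) (f j) = 0 := by
    intro i j hij
    have : inner ℂ (f i) (f j) = (B * Bᴴ) j i := by
      simp [f, PiLp.inner_apply, Matrix.mul_apply]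
    rw [this, hB, Matrix.diagonal_apply_ne _ hij.symm]
  have hcard : Module.finrank ℂ (EuclideanSpace ℂ (Fin d)) = Fintype.card (Fin d) := by simp
  let b := InnerProductSpace.gramSchmidtOrthonormalBasis hcard f
  have hb : ∀ i, f i = (‖f i‖ : ℂ) • b i := by
    intro i
    by_cases h0 : f i = 0
    · simp [h0]
    · have := InnerProductSpace.gramSchmidtOrthonormalBasis_apply_of_orthogonal hcard hf h0
      change f i = (‖f i‖ : ℂ) • InnerProductSpace.gramSchmidtOrthonormalBasis hcard f i
      have h1 : (‖f i‖ : ℂ) * (‖f i‖ : ℂ)⁻¹ = 1 := mul_inv_cancel₀ (by simpa using h0)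
      rw [this, smul_smul]
      exact (one_smul ℂ (f i)).symm.trans (congrArg (· • f i) h1.symm)
  refine ⟨V, V.2, Matrix.of fun i j => b i j, ?_, fun i => (‖f i‖ : ℂ), ?_⟩
  · rw [Matrix.mem_unitaryGroup_iff]
    ext i j
    have := orthonormal_iff_ite.mp b.orthonormal j i
    simp only [PiLp.inner_apply, RCLike.inner_apply] at this
    simp [Matrix.mul_apply, Matrix.star_apply, Matrix.one_apply, this, eq_comm]
  · have : Matrix.diagonal (fun i => (‖f i‖ : ℂ)) * (Matrix.of fun i j => b i j) = B := by
      ext i j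
      have := congrArg (fun v => v j) (hb i)
      simp only [PiLp.smul_apply, smul_eq_mul] at this
      rw [Matrix.diagonal_mul, Matrix.of_apply, ← this]
    rw [Matrix.mul_assoc, this]
    simp only [B]
    rw [← Matrix.mul_assoc, hVV, Matrix.one_mul]

instance compactSpaceU : CompactSpace (Matrix.unitaryGroup (Fin d) ℂ) := by
  refine isCompact_iff_compactSpace.mp (?_ : IsCompact
    ((Matrix.unitaryGroup (Fin d) ℂ : Submonoid _) : Set (Matrix (Fin d) (Fin d) ℂ)))
  have hc : IsCompact (Set.univ.pi fun _ : Fin d => Set.univ.pi fun _ : Fin d =>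
      Metric.closedBall (0 : ℂ) 1) :=
    isCompact_univ_pi fun _ => isCompact_univ_pi fun _ => isCompact_closedBall _ _
  refine IsCompact.of_isClosed_subset hc ?_ ?_
  · exact isClosed_unitary
  · intro U hU i _ j _
    simpa using entry_norm_bound_of_unitary hU i j


noncomputable instance measU : MeasurableSpace (Matrix.unitaryGroup (Fin d) ℂ) := borel _

instance borelU : BorelSpace (Matrix.unitaryGroup (Fin d) ℂ) := ⟨rfl⟩

instance sctU : SecondCountableTopology (Matrix.unitaryGroup (Fin d) ℂ) := by
  have : SecondCountableTopology (Matrix (Fin d) (Fin d) ℂ) :=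
    inferInstanceAs (SecondCountableTopology (Fin d → Fin d → ℂ))
  exact TopologicalSpace.Subtype.secondCountableTopology _

/-- Haar probability measure on the unitary group. -/
noncomputable def haarU (d : ℕ) : Measure (Matrix.unitaryGroup (Fin d) ℂ) :=
  Measure.haarMeasure ⊤

instance haarU_prob : IsProbabilityMeasure (haarU d) :=
  ⟨by simpa [haarU] using Measure.haarMeasure_self (K₀ := (⊤ : TopologicalSpace.PositiveCompacts
      (Matrix.unitaryGroup (Fin d) ℂ)))⟩

instance haarU_inv : (haarU d).IsMulLeftInvariant := by unfold haarU; infer_instance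

lemma continuous_tpow {X : Type*} [TopologicalSpace X] {f : X → Matrix (Fin d) (Fin d) ℂ}
    (hf : Continuous f) (a b : Fin N → Fin d) : Continuous fun x => tpow (f x) N a b := by
  simp only [tpow, Matrix.of_apply]
  exact continuous_finsetProd _ fun i _ => hf.matrix_elem _ _

lemma integrable_tpow (A : Matrix (Fin d) (Fin d) ℂ) (x y : (Fin N → Fin d) × (Fin N → Fin d)) :
    Integrable (fun U : Matrix.unitaryGroup (Fin d) ℂ =>
      tpow (A * (U : Matrix (Fin d) (Fin d) ℂ)) N x.1 x.2 *
      conj (tpow (A * (U : Matrix (Fin d) (Fin d) ℂ)) N y.1 y.2)) (haarU d) := by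
  apply Continuous.integrable_of_hasCompactSupport _ (HasCompactSupport.of_compactSpace _)
  have h : Continuous fun U : Matrix.unitaryGroup (Fin d) ℂ =>
      A * (U : Matrix (Fin d) (Fin d) ℂ) := continuous_const.mul continuous_subtype_val
  exact (continuous_tpow h _ _).mul (Complex.continuous_conj.comp (continuous_tpow h _ _))

/-- The averaged state obtained from the amplitude matrix `A`. -/
noncomputable def avg (N : ℕ) (A : Matrix (Fin d) (Fin d) ℂ) :
    Matrix ((Fin N → Fin d) × (Fin N → Fin d)) ((Fin N → Fin d) × (Fin N → Fin d)) ℂ :=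
  Matrix.of fun x y => ∫ U : Matrix.unitaryGroup (Fin d) ℂ,
      tpow (A * (U : Matrix (Fin d) (Fin d) ℂ)) N x.1 x.2 *
      conj (tpow (A * (U : Matrix (Fin d) (Fin d) ℂ)) N y.1 y.2) ∂(haarU d)

/-- `A^{⊗N} ⊗ 1`. -/
noncomputable def lift (N : ℕ) (A : Matrix (Fin d) (Fin d) ℂ) :
    Matrix ((Fin N → Fin d) × (Fin N → Fin d)) ((Fin N → Fin d) × (Fin N → Fin d)) ℂ :=
  tpow A N ⊗ₖ (1 : Matrix (Fin N → Fin d) (Fin N → Fin d) ℂ)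

lemma lift_mul (A B : Matrix (Fin d) (Fin d) ℂ) : lift N (A * B) = lift N A * lift N B := by
  rw [lift, lift, lift, ← Matrix.mul_kronecker_mul, tpow_mul_s3, Matrix.one_mul]

lemma lift_one : lift N (1 : Matrix (Fin d) (Fin d) ℂ) = 1 := by
  rw [lift, tpow_one, Matrix.one_kronecker_one]

lemma lift_conjTranspose (A : Matrix (Fin d) (Fin d) ℂ) : lift N Aᴴ = (lift N A)ᴴ := by
  rw [lift, lift, tpow_conjTranspose_s3, Matrix.conjTranspose_kronecker, Matrix.conjTranspose_one]

lemma tpow_mul_eq_lift (A B : Matrix (Fin d) (Fin d) ℂ) (x : (Fin N → Fin d) × (Fin N → Fin d)) :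
    tpow (A * B) N x.1 x.2 = ∑ z, lift N A x z * tpow B N z.1 z.2 := by
  rw [tpow_mul_s3, Matrix.mul_apply, Fintype.sum_prod_type]
  simp [lift, Matrix.kroneckerMap_apply, Matrix.one_apply]

lemma avg_mul (A B : Matrix (Fin d) (Fin d) ℂ) :
    avg N (A * B) = lift N A * avg N B * (lift N A)ᴴ := by
  ext x y
  simp only [avg, Matrix.of_apply, Matrix.mul_apply, Matrix.conjTranspose_apply, Finset.sum_mul]
  rw [Finset.sum_comm]
  have : ∀ U : Matrix.unitaryGroup (Fin d) ℂ,
      tpow (A * B * (U : Matrix (Fin d) (Fin d) ℂ)) N x.1 x.2 *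
      conj (tpow (A * B * (U : Matrix (Fin d) (Fin d) ℂ)) N y.1 y.2) =
      ∑ z, ∑ w, (lift N A x z * conj (lift N A y w)) *
        (tpow (B * (U : Matrix (Fin d) (Fin d) ℂ)) N z.1 z.2 *
          conj (tpow (B * (U : Matrix (Fin d) (Fin d) ℂ)) N w.1 w.2)) := by
    intro U
    rw [Matrix.mul_assoc, tpow_mul_eq_lift, tpow_mul_eq_lift, map_sum, Finset.sum_mul_sum]
    refine Finset.sum_congr rfl fun z _ => Finset.sum_congr rfl fun w _ => ?_
    rw [map_mul]; ring
  simp_rw [this]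
  rw [integral_finsetSum _ fun z _ => integrable_finsetSum _ fun w _ =>
    (integrable_tpow B z w).const_mul _]
  refine Finset.sum_congr rfl fun z _ => ?_
  rw [integral_finsetSum _ fun w _ => (integrable_tpow B z w).const_mul _]
  refine Finset.sum_congr rfl fun w _ => ?_
  rw [integral_const_mul]
  simp only [RCLike.star_def]
  ring

lemma avg_unitary (V : Matrix (Fin d) (Fin d) ℂ) (hV : V ∈ Matrix.unitaryGroup (Fin d) ℂ) :
    avg N V = avg N 1 := by
  ext x y
  simp only [avg, Matrix.of_apply, Matrix.one_mul]
  exact integral_mul_left_eq_self (μ := haarU d)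
    (fun U : Matrix.unitaryGroup (Fin d) ℂ => tpow (U : Matrix (Fin d) (Fin d) ℂ) N x.1 x.2 *
      conj (tpow (U : Matrix (Fin d) (Fin d) ℂ) N y.1 y.2)) ⟨V, hV⟩

lemma commute_unitary (V : Matrix (Fin d) (Fin d) ℂ) (hV : V ∈ Matrix.unitaryGroup (Fin d) ℂ) :
    Commute (lift N V) (avg N 1) := by
  have h := avg_mul (N := N) V 1
  rw [Matrix.mul_one, avg_unitary V hV, ← lift_conjTranspose] at h
  have h2 : lift N Vᴴ * lift N V = 1 := by
    rw [← lift_mul, ← lift_one]; congr 1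
    exact Matrix.mem_unitaryGroup_iff'.mp hV
  change lift N V * avg N 1 = avg N 1 * lift N V
  conv_rhs => rw [h]
  rw [Matrix.mul_assoc _ _ (lift N V), h2, Matrix.mul_one]

lemma lift_diagonal (s : Fin d → ℂ) :
    lift N (Matrix.diagonal s) =
      Matrix.diagonal (fun x : (Fin N → Fin d) × (Fin N → Fin d) => ∏ i, s (x.1 i)) := by
  rw [lift, tpow_diagonal_s3, ← Matrix.diagonal_one, Matrix.diagonal_kronecker_diagonal]
  simp

lemma prod_eq_count (s : Fin d → ℂ) (a : Fin N → Fin d) :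
    ∏ i, s (a i) = ∏ k, s k ^ (Finset.univ.filter fun i => a i = k).card := by
  rw [← Finset.prod_fiberwise Finset.univ a]
  refine Finset.prod_congr rfl fun k _ => ?_
  rw [Finset.prod_congr rfl (g := fun _ => s k), Finset.prod_const]
  intro i hi
  rw [(Finset.mem_filter.mp hi).2]

lemma count_eq (x y : (Fin N → Fin d) × (Fin N → Fin d)) (h : avg N (1 : Matrix (Fin d) (Fin d) ℂ) x y ≠ 0)
    (k : Fin d) : (Finset.univ.filter fun i => x.1 i = k).card =
      (Finset.univ.filter fun i => y.1 i = k).card := by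
  obtain ⟨ζ, hζ⟩ : ∃ ζ : ℂ, IsPrimitiveRoot ζ (N + 1) :=
    ⟨_, Complex.isPrimitiveRoot_exp (N + 1) (Nat.succ_ne_zero N)⟩
  have hn : ‖ζ‖ = 1 := hζ.norm'_eq_one (Nat.succ_ne_zero N)
  let s : Fin d → ℂ := Function.update 1 k ζ
  have hs : ∀ a : Fin N → Fin d, ∏ i, s (a i) =
      ζ ^ (Finset.univ.filter fun i => a i = k).card := by
    intro a
    rw [prod_eq_count, Finset.prod_eq_single k]
    · simp [s]
    · intro b _ hb; simp [s, hb]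
    · simp
  have hu : Matrix.diagonal s ∈ Matrix.unitaryGroup (Fin d) ℂ := by
    rw [Matrix.mem_unitaryGroup_iff, Matrix.star_eq_conjTranspose, Matrix.diagonal_conjTranspose,
      Matrix.diagonal_mul_diagonal, ← Matrix.diagonal_one]
    congr 1
    ext i
    by_cases hi : i = k
    · subst hi; simp [s, Complex.mul_conj, Complex.normSq_eq_norm_sq, hn]
    · simp [s, hi]
  have hc := congrFun (congrFun (commute_unitary (N := N) _ hu).eq x) y
  rw [lift_diagonal, Matrix.diagonal_mul, Matrix.mul_diagonal, hs, hs, mul_comm] at hc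
  have hc' := mul_left_cancel₀ h hc
  have hle : ∀ a : Fin N → Fin d, (Finset.univ.filter fun i => a i = k).card < N + 1 := fun a =>
    Nat.lt_succ_of_le ((Finset.card_filter_le _ _).trans (by simp))
  exact hζ.pow_inj (hle _) (hle _) hc'

lemma commute_lift (A : Matrix (Fin d) (Fin d) ℂ) : Commute (lift N A) (avg N 1) := by
  obtain ⟨V, hV, W, hW, s, rfl⟩ := exists_svd A
  rw [lift_mul, lift_mul]
  refine ((commute_unitary V hV).mul_left ?_).mul_left (commute_unitary W hW)
  change _ * _ = _ * _
  ext x y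
  rw [lift_diagonal, Matrix.diagonal_mul, Matrix.mul_diagonal]
  by_cases h : avg N (1 : Matrix (Fin d) (Fin d) ℂ) x y = 0
  · simp [h]
  · rw [mul_comm, prod_eq_count, prod_eq_count]
    simp_rw [count_eq x y h]

lemma avg_posSemidef : (avg N (1 : Matrix (Fin d) (Fin d) ℂ)).PosSemidef := by
  apply Matrix.PosSemidef.of_dotProduct_mulVec_nonneg
  · ext x y
    simp only [avg, Matrix.conjTranspose_apply, Matrix.of_apply, RCLike.star_def]
    rw [← integral_conj]
    congr 1
    ext U
    simp [mul_comm]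
  · intro v
    have key : star v ⬝ᵥ (avg N (1 : Matrix (Fin d) (Fin d) ℂ)) *ᵥ v =
        ∫ U : Matrix.unitaryGroup (Fin d) ℂ, ((Complex.normSq (∑ x, conj (v x) *
          tpow ((1 : Matrix (Fin d) (Fin d) ℂ) * (U : Matrix (Fin d) (Fin d) ℂ)) N x.1 x.2) : ℝ) : ℂ) ∂(haarU d) := by
      have : ∀ U : Matrix.unitaryGroup (Fin d) ℂ, ((Complex.normSq (∑ x, conj (v x) *
          tpow ((1 : Matrix (Fin d) (Fin d) ℂ) * (U : Matrix (Fin d) (Fin d) ℂ)) N x.1 x.2) : ℝ) : ℂ) =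
          ∑ x, ∑ y, (conj (v x) * v y) * (tpow ((1 : Matrix (Fin d) (Fin d) ℂ) * (U : Matrix (Fin d) (Fin d) ℂ)) N x.1 x.2 *
            conj (tpow ((1 : Matrix (Fin d) (Fin d) ℂ) * (U : Matrix (Fin d) (Fin d) ℂ)) N y.1 y.2)) := by
        intro U
        rw [← Complex.mul_conj, map_sum, Finset.sum_mul_sum]
        refine Finset.sum_congr rfl fun z _ => Finset.sum_congr rfl fun w _ => ?_
        rw [map_mul, Complex.conj_conj]; ring
      simp_rw [this]
      rw [integral_finsetSum _ fun z _ => integrable_finsetSum _ fun w _ =>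
        (integrable_tpow 1 z w).const_mul _]
      simp only [dotProduct, Matrix.mulVec, Finset.mul_sum]
      refine Finset.sum_congr rfl fun z _ => ?_
      rw [integral_finsetSum _ fun w _ => (integrable_tpow 1 z w).const_mul _]
      refine Finset.sum_congr rfl fun w _ => ?_
      rw [integral_const_mul]
      simp only [avg, Matrix.of_apply, Pi.star_apply, RCLike.star_def]
      ring
    rw [key]
    refine le_of_le_of_eq ?_ (integral_ofReal (𝕜 := ℂ)).symm
    exact Complex.zero_le_real.mpr (integral_nonneg fun U => Complex.normSq_nonneg _)

open scoped MatrixOrder in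
lemma exists_sqrt {κ : Type*} [Fintype κ] [DecidableEq κ] (J : Matrix κ κ ℂ) (hJ : J.PosSemidef) :
    ∃ S : Matrix κ κ ℂ, Sᴴ = S ∧ S * S = J ∧ ∀ B, Commute B J → Commute B S := by
  refine ⟨CFC.sqrt J, ?_, CFC.sqrt_mul_sqrt_self J hJ.nonneg, ?_⟩
  · exact (Matrix.nonneg_iff_posSemidef.mp (CFC.sqrt_nonneg J)).isHermitian
  · intro B hB
    exact (Commute.cfcₙ_nnreal hB.symm _).symm

/-- Partial trace over the second factor. -/
noncomputable def pt {κ : Type*} [Fintype κ] (X : Matrix (κ × κ) (κ × κ) ℂ) : Matrix κ κ ℂ :=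
  ∑ b, X.submatrix (fun a => (a, b)) (fun a => (a, b))

lemma pt_apply {κ : Type*} [Fintype κ] (X : Matrix (κ × κ) (κ × κ) ℂ) (a a' : κ) :
    pt X a a' = ∑ b, X (a, b) (a', b) := by
  simp [pt, Matrix.sum_apply]

lemma pt_sub {κ : Type*} [Fintype κ] (X Y : Matrix (κ × κ) (κ × κ) ℂ) :
    pt (X - Y) = pt X - pt Y := by
  ext a b; simp [pt_apply]

lemma pt_posSemidef {κ : Type*} [Fintype κ] (X : Matrix (κ × κ) (κ × κ) ℂ) (h : X.PosSemidef) :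
    (pt X).PosSemidef :=
  Matrix.posSemidef_sum _ fun b _ => h.submatrix _

lemma trace_pt {κ : Type*} [Fintype κ] [DecidableEq κ] (X : Matrix (κ × κ) (κ × κ) ℂ)
    (Y : Matrix κ κ ℂ) :
    (pt X * Y).trace = (X * (Y ⊗ₖ (1 : Matrix κ κ ℂ))).trace := by
  simp only [Matrix.trace, Matrix.diag_apply, Matrix.mul_apply, pt_apply, Fintype.sum_prod_type,
    Matrix.kroneckerMap_apply, Matrix.one_apply, mul_ite, mul_one, mul_zero,
    Finset.sum_ite_eq', Finset.mem_univ, if_true, Finset.sum_mul]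
  refine Finset.sum_congr rfl fun a _ => ?_
  rw [Finset.sum_comm]

lemma pt_avg : pt (avg N (1 : Matrix (Fin d) (Fin d) ℂ)) = 1 := by
  ext a a'
  rw [pt_apply]
  simp only [avg, Matrix.of_apply]
  rw [← integral_finsetSum _ fun b _ => integrable_tpow 1 (a, b) (a', b)]
  have : ∀ U : Matrix.unitaryGroup (Fin d) ℂ,
      ∑ b, tpow ((1 : Matrix (Fin d) (Fin d) ℂ) * (U : Matrix (Fin d) (Fin d) ℂ)) N a b *
        conj (tpow ((1 : Matrix (Fin d) (Fin d) ℂ) * (U : Matrix (Fin d) (Fin d) ℂ)) N a' b) =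
      (1 : Matrix (Fin N → Fin d) (Fin N → Fin d) ℂ) a a' := by
    intro U
    have h : (U : Matrix (Fin d) (Fin d) ℂ) * (U : Matrix (Fin d) (Fin d) ℂ)ᴴ = 1 :=
      Matrix.mem_unitaryGroup_iff.mp U.2
    have h4 := tpow_mul_s3 (N := N) (U : Matrix (Fin d) (Fin d) ℂ) (U : Matrix (Fin d) (Fin d) ℂ)ᴴ
    rw [h, tpow_one, tpow_conjTranspose_s3] at h4
    rw [h4, Matrix.mul_apply, Matrix.one_mul]
    rfl
  simp_rw [this]
  simp

/-- The matrix of amplitudes of `ψ`. -/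
noncomputable def amat (ψ : Fin d × Fin d → ℂ) : Matrix (Fin d) (Fin d) ℂ :=
  Matrix.of fun i j => ψ (i, j)

lemma amat_applyB (U : Matrix (Fin d) (Fin d) ℂ) (ψ : Fin d × Fin d → ℂ) :
    amat (applyB U ψ) = amat ψ * Uᵀ := by
  ext i j
  simp [amat, applyB, Matrix.mul_apply, mul_comm]

/-- Regrouping of indices. -/
def regroup (d N : ℕ) : (Fin N → Fin d × Fin d) ≃ (Fin N → Fin d) × (Fin N → Fin d) :=
  Equiv.arrowProdEquivProdArrow _ _ _

/-- `T` with regrouped indices. -/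
noncomputable def rg (T : Matrix (Fin N → Fin d × Fin d) (Fin N → Fin d × Fin d) ℂ) :
    Matrix ((Fin N → Fin d) × (Fin N → Fin d)) ((Fin N → Fin d) × (Fin N → Fin d)) ℂ :=
  T.submatrix (regroup d N).symm (regroup d N).symm

lemma acc_eq (T : Matrix (Fin N → Fin d × Fin d) (Fin N → Fin d × Fin d) ℂ)
    (ψ : Fin d × Fin d → ℂ) :
    acc T (outer ψ) = (∑ x, ∑ y, rg T x y * (tpow (amat ψ) N y.1 y.2 *
      conj (tpow (amat ψ) N x.1 x.2))).re := by
  simp only [acc, Matrix.trace, Matrix.diag_apply, Matrix.mul_apply]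
  congr 1
  refine Fintype.sum_equiv (regroup d N) _ _ fun x => Fintype.sum_equiv (regroup d N) _ _ fun y => ?_
  simp only [rg, Matrix.submatrix_apply, Equiv.symm_apply_apply]
  congr 1
  simp [tpow, outer, amat, regroup, Finset.prod_mul_distrib, Equiv.arrowProdEquivProdArrow]

lemma acc_localA (M : Matrix (Fin N → Fin d) (Fin N → Fin d) ℂ) (ψ : Fin d × Fin d → ℂ) :
    acc (localA M) (outer ψ) = (M * (tpow (amat ψ) N * (tpow (amat ψ) N)ᴴ)).trace.re := by
  rw [acc_eq]
  congr 1
  have : rg (localA M) = M ⊗ₖ (1 : Matrix (Fin N → Fin d) (Fin N → Fin d) ℂ) := by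
    ext x y
    simp [rg, localA, regroup, Matrix.kroneckerMap_apply, Matrix.one_apply,
      Equiv.arrowProdEquivProdArrow]
  rw [this]
  simp only [Matrix.trace, Matrix.diag_apply, Matrix.mul_apply, Fintype.sum_prod_type,
    Matrix.kroneckerMap_apply, Matrix.one_apply, mul_ite, mul_one, mul_zero, ite_mul, zero_mul,
    Finset.sum_ite_eq, Finset.mem_univ, if_true, Finset.mul_sum, Matrix.conjTranspose_apply,
    RCLike.star_def]
  refine Finset.sum_congr rfl fun a _ => ?_
  rw [Finset.sum_comm]

lemma acc_avg (T : Matrix (Fin N → Fin d × Fin d) (Fin N → Fin d × Fin d) ℂ)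
    (ψ : Fin d × Fin d → ℂ) :
    ∫ U : Matrix.unitaryGroup (Fin d) ℂ,
      acc T (outer (applyB (U : Matrix (Fin d) (Fin d) ℂ)ᵀ ψ)) ∂(haarU d) =
      (rg T * avg N (amat ψ)).trace.re := by
  simp_rw [acc_eq, amat_applyB, Matrix.transpose_transpose]
  have hint : ∀ x y, Integrable (fun U : Matrix.unitaryGroup (Fin d) ℂ => rg T x y *
      (tpow (amat ψ * (U : Matrix (Fin d) (Fin d) ℂ)) N y.1 y.2 *
      conj (tpow (amat ψ * (U : Matrix (Fin d) (Fin d) ℂ)) N x.1 x.2))) (haarU d) :=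
    fun x y => (integrable_tpow (amat ψ) y x).const_mul _
  have h := integral_re (μ := haarU d) (f := fun U : Matrix.unitaryGroup (Fin d) ℂ =>
      ∑ x, ∑ y, rg T x y *
      (tpow (amat ψ * (U : Matrix (Fin d) (Fin d) ℂ)) N y.1 y.2 *
      conj (tpow (amat ψ * (U : Matrix (Fin d) (Fin d) ℂ)) N x.1 x.2)))
      (integrable_finsetSum _ fun x _ => integrable_finsetSum _ fun y _ => hint x y)
  refine Eq.trans h ?_
  change Complex.re _ = _
  congr 1
  rw [integral_finsetSum _ fun x _ => integrable_finsetSum _ fun y _ => hint x y]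
  simp only [Matrix.trace, Matrix.diag_apply, Matrix.mul_apply]
  refine Finset.sum_congr rfl fun x _ => ?_
  rw [integral_finsetSum _ fun y _ => hint x y]
  refine Finset.sum_congr rfl fun y _ => ?_
  rw [integral_const_mul]
  rfl

lemma exists_local (T : Matrix (Fin N → Fin d × Fin d) (Fin N → Fin d × Fin d) ℂ)
    (hT : IsTester T) : ∃ M : Matrix (Fin N → Fin d) (Fin N → Fin d) ℂ, IsTester M ∧
      ∀ ψ : Fin d × Fin d → ℂ, ∫ U : Matrix.unitaryGroup (Fin d) ℂ,
        acc T (outer (applyB (U : Matrix (Fin d) (Fin d) ℂ)ᵀ ψ)) ∂(haarU d) =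
        acc (localA M) (outer ψ) := by
  obtain ⟨S, hS, hSS, hcomm⟩ := exists_sqrt _ (avg_posSemidef (d := d) (N := N))
  have h1 : (rg T).PosSemidef := hT.1.submatrix _
  have h2 : (1 - rg T).PosSemidef := by
    have : 1 - rg T = rg (1 - T) := by
      simp [rg, Matrix.submatrix_sub]
    rw [this]
    exact hT.2.submatrix _
  refine ⟨pt (S * rg T * S), ⟨?_, ?_⟩, fun ψ => ?_⟩
  · apply pt_posSemidef
    simpa only [hS] using h1.mul_mul_conjTranspose_same S
  · have : (1 : Matrix (Fin N → Fin d) (Fin N → Fin d) ℂ) - pt (S * rg T * S) =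
        pt (S * (1 - rg T) * S) := by
      rw [Matrix.mul_sub, Matrix.sub_mul, Matrix.mul_one, hSS, pt_sub, pt_avg]
    rw [this]
    apply pt_posSemidef
    simpa only [hS] using h2.mul_mul_conjTranspose_same S
  · rw [acc_avg, acc_localA, trace_pt]
    congr 1
    have hl : (tpow (amat ψ) N * (tpow (amat ψ) N)ᴴ) ⊗ₖ
        (1 : Matrix (Fin N → Fin d) (Fin N → Fin d) ℂ) = lift N (amat ψ) * (lift N (amat ψ))ᴴ := by
      rw [← lift_conjTranspose, ← lift_mul, lift, tpow_mul_s3, tpow_conjTranspose_s3]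
    have hc1 := (hcomm _ (commute_lift (amat ψ))).eq
    have hc2 := (hcomm _ (commute_lift (amat ψ)ᴴ)).eq
    rw [lift_conjTranspose] at hc2
    have ha := avg_mul (N := N) (amat ψ) 1
    rw [Matrix.mul_one] at ha
    rw [hl, ha, ← hSS, Matrix.mul_assoc (S * rg T), Matrix.mul_assoc S, Matrix.trace_mul_comm S]
    simp only [Matrix.mul_assoc]
    rw [hc2, ← Matrix.mul_assoc (lift N (amat ψ)) S, hc1, Matrix.mul_assoc]

lemma isUnitVec_applyB (U : Matrix (Fin d) (Fin d) ℂ) (hU : Uᴴ * U = 1)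
    (ψ : Fin d × Fin d → ℂ) (h : IsUnitVec ψ) : IsUnitVec (applyB U ψ) := by
  have key : ∀ φ : Fin d × Fin d → ℂ, ((∑ x, Complex.normSq (φ x) : ℝ) : ℂ) =
      ((amat φ) * (amat φ)ᴴ).trace := by
    intro φ
    simp [Matrix.trace, Matrix.mul_apply, amat, Fintype.sum_prod_type, Complex.mul_conj]
  unfold IsUnitVec at *
  have : ((∑ x, Complex.normSq (applyB U ψ x) : ℝ) : ℂ) = ((∑ x, Complex.normSq (ψ x) : ℝ) : ℂ) := by
    rw [key, key, amat_applyB, Matrix.conjTranspose_mul]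
    have : Uᵀ * Uᵀᴴ = 1 := by
      have h3 := congrArg Matrix.transpose hU
      rw [Matrix.transpose_mul, Matrix.transpose_one] at h3
      exact h3
    rw [Matrix.mul_assoc, ← Matrix.mul_assoc Uᵀ, this, Matrix.one_mul]
  rw [Complex.ofReal_inj] at this
  rw [this, h]

lemma norm_le_one_of_unit (ψ : Fin d × Fin d → ℂ) (h : IsUnitVec ψ) (x : Fin d × Fin d) :
    ‖ψ x‖ ≤ 1 := by
  have h1 : Complex.normSq (ψ x) ≤ 1 := by
    rw [← h]
    exact Finset.single_le_sum (f := fun x => Complex.normSq (ψ x))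
      (fun i _ => Complex.normSq_nonneg _) (Finset.mem_univ x)
  rw [Complex.normSq_eq_norm_sq] at h1
  nlinarith [norm_nonneg (ψ x)]

lemma acc_bound (T : Matrix (Fin N → Fin d × Fin d) (Fin N → Fin d × Fin d) ℂ)
    (ψ : Fin d × Fin d → ℂ) (h : IsUnitVec ψ) :
    ‖acc T (outer ψ)‖ ≤ ∑ x, ∑ y, ‖T x y‖ := by
  refine (Complex.abs_re_le_norm _).trans ?_
  simp only [Matrix.trace, Matrix.diag_apply, Matrix.mul_apply]
  refine (norm_sum_le _ _).trans (Finset.sum_le_sum fun x _ => (norm_sum_le _ _).trans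
    (Finset.sum_le_sum fun y _ => ?_))
  rw [norm_mul]
  refine mul_le_of_le_one_right (norm_nonneg _) ?_
  simp only [tpow, outer, Matrix.of_apply, norm_prod, norm_mul, RCLike.norm_conj]
  refine Finset.prod_le_one (fun i _ => by positivity) fun i _ => ?_
  exact mul_le_one₀ (norm_le_one_of_unit ψ h _) (norm_nonneg _) (norm_le_one_of_unit ψ h _)

lemma continuous_acc (T : Matrix (Fin N → Fin d × Fin d) (Fin N → Fin d × Fin d) ℂ) :
    Continuous fun ψ : Fin d × Fin d → ℂ => acc T (outer ψ) := by
  simp only [acc, Matrix.trace, Matrix.diag_apply, Matrix.mul_apply, tpow, outer, Matrix.of_apply]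
  fun_prop

lemma continuous_applyB : Continuous fun p : Matrix (Fin d) (Fin d) ℂ × (Fin d × Fin d → ℂ) =>
    applyB p.1 p.2 := by
  refine continuous_pi fun x => ?_
  simp only [applyB]
  refine continuous_finsetSum _ fun k _ => ?_
  exact (continuous_fst.matrix_elem _ _).mul ((continuous_apply _).comp continuous_snd)

end aux

/-- Theorem `theorem-424241`, optimal average-case local tester. -/
theorem stmt_3 (d N : ℕ) (hd : 1 ≤ d) (hN : 1 ≤ N)
    (T : Matrix (Fin N → Fin d × Fin d) (Fin N → Fin d × Fin d) ℂ)
    (hT : IsTester T) :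
    ∃ M : Matrix (Fin N → Fin d) (Fin N → Fin d) ℂ,
      IsTester M ∧
      ∀ D : Measure (Fin d × Fin d → ℂ), IsProbabilityMeasure D →
        (∀ᵐ ψ ∂D, IsUnitVec ψ) →
        (∀ U ∈ Matrix.unitaryGroup (Fin d) ℂ, D.map (applyB U) = D) →
        ∫ ψ, acc T (outer ψ) ∂D = ∫ ψ, acc (localA M) (outer ψ) ∂D := by
  obtain ⟨M, hM, hloc⟩ := exists_local T hT
  refine ⟨M, hM, fun D hD hunit hinv => ?_⟩
  simp_rw [← hloc]
  have hstar : ∀ U : Matrix.unitaryGroup (Fin d) ℂ,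
      (U : Matrix (Fin d) (Fin d) ℂ)ᵀ ∈ Matrix.unitaryGroup (Fin d) ℂ := by
    intro U
    have h := Matrix.mem_unitaryGroup_iff'.mp U.2
    rw [Matrix.mem_unitaryGroup_iff]
    have h3 := congrArg Matrix.transpose h
    rw [Matrix.transpose_mul, Matrix.transpose_one] at h3
    exact h3
  have hcont : Continuous fun p : (Fin d × Fin d → ℂ) × Matrix.unitaryGroup (Fin d) ℂ =>
      acc T (outer (applyB (p.2 : Matrix (Fin d) (Fin d) ℂ)ᵀ p.1)) := by
    refine (continuous_acc T).comp (continuous_applyB.comp (Continuous.prodMk ?_ continuous_fst))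
    exact (continuous_subtype_val.comp continuous_snd).matrix_transpose
  have hint : Integrable (Function.uncurry fun (ψ : Fin d × Fin d → ℂ)
      (U : Matrix.unitaryGroup (Fin d) ℂ) =>
      acc T (outer (applyB (U : Matrix (Fin d) (Fin d) ℂ)ᵀ ψ))) (D.prod (haarU d)) := by
    refine Integrable.of_bound (C := ∑ x, ∑ y, ‖T x y‖) ?_ ?_
    · exact hcont.measurable.aestronglyMeasurable
    · have := (Measure.quasiMeasurePreserving_fst (μ := D) (ν := haarU d)).ae hunit
      filter_upwards [this] with p hp
      exact acc_bound T _ (isUnitVec_applyB _ (Matrix.mem_unitaryGroup_iff'.mp (hstar p.2)) _ hp)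
  rw [integral_integral_swap hint]
  have : ∀ U : Matrix.unitaryGroup (Fin d) ℂ,
      ∫ ψ, acc T (outer (applyB (U : Matrix (Fin d) (Fin d) ℂ)ᵀ ψ)) ∂D =
      ∫ ψ, acc T (outer ψ) ∂D := by
    intro U
    have hc : Continuous (applyB (U : Matrix (Fin d) (Fin d) ℂ)ᵀ) :=
      continuous_applyB.comp (Continuous.prodMk continuous_const continuous_id)
    conv_rhs => rw [← hinv _ (hstar U)]
    rw [integral_map hc.measurable.aemeasurable (continuous_acc T).aestronglyMeasurable]
  simp_rw [this]
  simp

end PaperStmt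
end
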